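/- arXiv:2001.02308 — 16 statements merged into one kernel-verified Lean document; each statement's English description precedes it below -/
import Mathlib

section
/- Let (V,ρ,μ,ν) be a representation of a post-Lie algebra (A,[·,·],▷). Then the map ρ + μ − ν : A → gl(V), x ↦ ρ(x) + μ(x) − ν(x), is a representation of the sub-adjacent Lie algebra (A,{·,·}) where {x,y} = x ▷ y − y ▷ x + [x,y]. -/
section Defs

variable (K : Type*) [Field K]
variable {A V : Type*} [AddCommGroup A] [Module K A] [AddCommGroup V] [Module K V]

/-- `f : A → A → V` is bilinear over `K`. -/
def IsBilin (f : A → A → V) : Prop :=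
  (∀ y, IsLinearMap K fun x => f x y) ∧ (∀ x, IsLinearMap K fun y => f x y)

/-- `b` is a Lie bracket on `A`. -/
def IsLieBracket (b : A → A → A) : Prop :=
  IsBilin K b ∧ (∀ x y, b x y = - b y x) ∧
    (∀ x y z, b x (b y z) + b y (b z x) + b z (b x y) = 0)

/-- `(A, b, t)` is a (left) post-Lie algebra. -/
def IsPostLie (b t : A → A → A) : Prop :=
  IsLieBracket K b ∧ IsBilin K t ∧
    (∀ x y z, t x (b y z) = b (t x y) z + b y (t x z)) ∧
    (∀ x y z, t (b x y) z =
      (t x (t y z) - t (t x y) z) - (t y (t x z) - t (t y x) z))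

/-- `ρ` is a representation of the Lie algebra `(A, b)` on `V`. -/
def IsLieRep (b : A → A → A) (ρ : A → V → V) : Prop :=
  (∀ x, IsLinearMap K (ρ x)) ∧ (∀ v, IsLinearMap K fun x => ρ x v) ∧
    (∀ x y v, ρ (b x y) v = ρ x (ρ y v) - ρ y (ρ x v))

/-- `(A, b, α, β)` is a BiHom-Lie algebra. -/
def IsBiHomLie (b : A → A → A) (α β : A → A) : Prop :=
  IsBilin K b ∧ IsLinearMap K α ∧ IsLinearMap K β ∧
    (∀ x, α (β x) = β (α x)) ∧
    (∀ x y, α (b x y) = b (α x) (α y)) ∧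
    (∀ x y, β (b x y) = b (β x) (β y)) ∧
    (∀ x y, b (β x) (α y) = - b (β y) (α x)) ∧
    (∀ x y z, b (β (β x)) (b (β y) (α z)) + b (β (β y)) (b (β z) (α x)) +
        b (β (β z)) (b (β x) (α y)) = 0)

/-- `(V, ρ, φ, ψ)` is a representation of the BiHom-Lie algebra `(A, b, α, β)`. -/
def IsBiHomRep (b : A → A → A) (α β : A → A) (ρ : A → V → V) (φ ψ : V → V) : Prop :=
  IsLinearMap K φ ∧ IsLinearMap K ψ ∧ (∀ v, φ (ψ v) = ψ (φ v)) ∧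
    (∀ x, IsLinearMap K (ρ x)) ∧ (∀ v, IsLinearMap K fun x => ρ x v) ∧
    (∀ x v, ρ (α x) (φ v) = φ (ρ x v)) ∧
    (∀ x v, ρ (β x) (ψ v) = ψ (ρ x v)) ∧
    (∀ x y v, ρ (b (β x) y) (ψ v) = ρ (α (β x)) (ρ y v) - ρ (β y) (ρ (α x) v))

/-- `(A, b, t, α, β)` is a (left) BiHom-post-Lie algebra. -/
def IsBiHomPostLie (b t : A → A → A) (α β : A → A) : Prop :=
  IsBiHomLie K b α β ∧ IsBilin K t ∧
    (∀ x y, α (t x y) = t (α x) (α y)) ∧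
    (∀ x y, β (t x y) = t (β x) (β y)) ∧
    (∀ x y z, t (α (β x)) (b y z) = b (t (β x) y) (β z) + b (β y) (t (α x) z)) ∧
    (∀ x y z, t (b (β x) (α y)) (β z) =
      (t (α (β x)) (t (α y) z) - t (t (β x) (α y)) (β z)) -
      (t (α (β y)) (t (α x) z) - t (t (β y) (α x)) (β z)))

/-- `(V, bv, ρ, φ, ψ)` is an `A`-module `K`-algebra over the BiHom-Lie algebra
`(A, b, α, β)`. -/
def IsModuleKAlgebra (b : A → A → A) (α β : A → A) (bv : V → V → V)
    (ρ : A → V → V) (φ ψ : V → V) : Prop :=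
  IsBiHomLie K bv φ ψ ∧ IsBiHomRep K b α β ρ φ ψ ∧
    (∀ x u v, ρ (α (β x)) (bv u v) = bv (ρ (β x) u) (ψ v) + bv (ψ u) (ρ (α x) v))

end Defs

/-- A representation of a post-Lie algebra `(A, b, t)` on `V`. -/
def IsPostLieRep (K : Type*) {A V : Type*} [Field K] [AddCommGroup A] [Module K A]
    [AddCommGroup V] [Module K V] (b t : A → A → A) (ρ μ ν : A → V → V) : Prop :=
  IsLieRep K b ρ ∧
    (∀ x, IsLinearMap K (μ x)) ∧ (∀ v, IsLinearMap K fun x => μ x v) ∧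
    (∀ x, IsLinearMap K (ν x)) ∧ (∀ v, IsLinearMap K fun x => ν x v) ∧
    (∀ x y v, ν (b x y) v = ρ x (ν y v) - ρ y (ν x v)) ∧
    (∀ x y v, ρ (t x y) v = μ x (ρ y v) - ρ y (μ x v)) ∧
    (∀ x y v, μ (b x y) v = μ x (μ y v) - μ (t x y) v - μ y (μ x v) + μ (t y x) v) ∧
    (∀ x y v, ν y (ρ x v) = μ x (ν y v) - ν y (μ x v) - ν (t x y) v + ν y (ν x v))

/-- `ρ + μ - ν` is a representation of the sub-adjacent Lie algebra. -/
theorem subAdjacent_rep_of_postLieRep {K A V : Type*} [Field K] [CharZero K]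
    [AddCommGroup A] [Module K A] [AddCommGroup V] [Module K V]
    (b t : A → A → A) (ρ μ ν : A → V → V)
    (hpl : IsPostLie K b t) (hrep : IsPostLieRep K b t ρ μ ν) :
    IsLieRep K (fun x y => t x y - t y x + b x y)
      (fun x v => ρ x v + μ x v - ν x v) := by
  obtain ⟨⟨hρ1, hρ2, hρb⟩, hμ1, hμ2, hν1, hν2, h1, h2, h3, h4⟩ := hrep
  refine ⟨fun x => ⟨fun u v => ?_, fun c v => ?_⟩, fun v => ⟨fun x y => ?_, fun c x => ?_⟩,
    fun x y v => ?_⟩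
  · simp only [(hρ1 x).map_add, (hμ1 x).map_add, (hν1 x).map_add]
    abel
  · simp only [(hρ1 x).map_smul, (hμ1 x).map_smul, (hν1 x).map_smul, smul_add, smul_sub]
  · simp only [(hρ2 v).map_add, (hμ2 v).map_add, (hν2 v).map_add]
    abel
  · simp only [(hρ2 v).map_smul, (hμ2 v).map_smul, (hν2 v).map_smul, smul_add, smul_sub]
  · simp only [(hρ1 _).map_add, (hμ1 _).map_add, (hν1 _).map_add,
      (hρ1 _).map_sub, (hμ1 _).map_sub, (hν1 _).map_sub,
      (hρ2 v).map_add, (hμ2 v).map_add, (hν2 v).map_add,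
      (hρ2 v).map_sub, (hμ2 v).map_sub, (hν2 v).map_sub, hρb, h1, h2, h3, h4]
    abel
end

section
/- Let (A,[·,·]) be a Lie algebra over a field K of characteristic zero and let α, β : A → A be two commuting Lie algebra morphisms. Then (A,[·,·]_{α,β},α,β), where [x,y]_{α,β} = [α(x),β(y)], is a BiHom-Lie algebra. -/
/-- twisting a Lie algebra by two commuting morphisms yields a
BiHom-Lie algebra. -/
theorem biHomLie_of_twisted_lie {K A : Type*} [Field K] [CharZero K]
    [AddCommGroup A] [Module K A] (b : A → A → A) (α β : A → A)
    (hb : IsLieBracket K b)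
    (hα : IsLinearMap K α) (hβ : IsLinearMap K β)
    (hαm : ∀ x y, α (b x y) = b (α x) (α y))
    (hβm : ∀ x y, β (b x y) = b (β x) (β y))
    (hcomm : ∀ x, α (β x) = β (α x)) :
    IsBiHomLie K (fun x y => b (α x) (β y)) α β := by
  obtain ⟨⟨hl, hr⟩, hskew, hjac⟩ := hb
  refine ⟨⟨fun y => ⟨fun u v => ?_, fun c u => ?_⟩, fun x => ⟨fun u v => ?_, fun c u => ?_⟩⟩,
    hα, hβ, hcomm, fun x y => ?_, fun x y => ?_, fun x y => ?_, fun x y z => ?_⟩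
  · simp only [hα.map_add]
    exact (hl (β y)).map_add _ _
  · simp only [hα.map_smul]
    exact (hl (β y)).map_smul _ _
  · simp only [hβ.map_add]
    exact (hr (α x)).map_add _ _
  · simp only [hβ.map_smul]
    exact (hr (α x)).map_smul _ _
  · simp only [hαm, hcomm]
  · simp only [hβm, hcomm]
  · simp only [hcomm]
    exact hskew _ _
  · simp only [hβm, hcomm]
    exact hjac _ _ _
end

section
/- Let (A,[·,·]) be a Lie algebra over a field K of characteristic zero, α, β : A → A two commuting Lie algebra morphisms, (V,ρ) a Lie algebra representation of (A,[·,·]), and φ, ψ : V → V two commuting linear maps satisfying ρ(α(x))∘φ = φ∘ρ(x) and ρ(β(x))∘ψ = ψ∘ρ(x) for all x ∈ A. Define ρ̃ : A → gl(V) by ρ̃(x)(v) = ρ(α(x))(ψ(v)). Then (V,ρ̃,φ,ψ) is a representation of the BiHom-Lie algebra (A,[·,·]_{α,β},α,β), where [x,y]_{α,β} = [α(x),β(y)]. -/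
/-- twisting a representation of a Lie algebra yields a
representation of the twisted BiHom-Lie algebra. -/
theorem biHomRep_of_twisted_rep {K A V : Type*} [Field K] [CharZero K]
    [AddCommGroup A] [Module K A] [AddCommGroup V] [Module K V]
    (b : A → A → A) (α β : A → A) (ρ : A → V → V) (φ ψ : V → V)
    (hb : IsLieBracket K b)
    (hα : IsLinearMap K α) (hβ : IsLinearMap K β)
    (hαm : ∀ x y, α (b x y) = b (α x) (α y))
    (hβm : ∀ x y, β (b x y) = b (β x) (β y))
    (hcomm : ∀ x, α (β x) = β (α x))
    (hρ : IsLieRep K b ρ)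
    (hφ : IsLinearMap K φ) (hψ : IsLinearMap K ψ)
    (hφψ : ∀ v, φ (ψ v) = ψ (φ v))
    (h1 : ∀ x v, ρ (α x) (φ v) = φ (ρ x v))
    (h2 : ∀ x v, ρ (β x) (ψ v) = ψ (ρ x v)) :
    IsBiHomRep K (fun x y => b (α x) (β y)) α β
      (fun x v => ρ (α x) (ψ v)) φ ψ := by
  obtain ⟨r1, r2, r3⟩ := hρ
  refine ⟨hφ, hψ, hφψ, ?_, ?_, ?_, ?_, ?_⟩
  · intro x
    exact ⟨fun u v => by simp only [hψ.map_add, (r1 (α x)).map_add],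
      fun c v => by simp only [hψ.map_smul, (r1 (α x)).map_smul]⟩
  · intro v
    exact ⟨fun x y => by simp only [hα.map_add]; exact (r2 (ψ v)).map_add _ _,
      fun c x => by simp only [hα.map_smul]; exact (r2 (ψ v)).map_smul _ _⟩
  · intro x v
    simp only [← hφψ, h1]
  · intro x v
    simp only [hcomm, h2]
  · intro x y v
    simp only [hαm, r3, hcomm, ← h2]
end

section
/- Let (A,[·,·],α,β) be a regular BiHom-Lie algebra, V a vector space with two commuting bijective linear maps φ, ψ : V → V, and ρ : A → gl(V) a linear map. Then (V,ρ,φ,ψ) is a representation of (A,[·,·],α,β) if and only if (A ⊕ V, [·,·]_ρ, α+φ, β+ψ) is a BiHom-Lie algebra, where [x+u, y+v]_ρ = [x,y] + ρ(x)v − ρ(α⁻¹β(y))φψ⁻¹(u), (α+φ)(x+u) = α(x)+φ(u), and (β+ψ)(x+u) = β(x)+ψ(u) for all x,y ∈ A, u,v ∈ V. -/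
/-- semidirect product characterization of representations of a
regular BiHom-Lie algebra. -/
theorem biHomRep_iff_semidirect {K A V : Type*} [Field K] [CharZero K]
    [AddCommGroup A] [Module K A] [AddCommGroup V] [Module K V]
    (b : A → A → A) (α β α' β' : A → A) (ρ : A → V → V) (φ ψ φ' ψ' : V → V)
    (hb : IsBiHomLie K b α β)
    (hαα' : ∀ x, α (α' x) = x) (hα'α : ∀ x, α' (α x) = x)
    (hββ' : ∀ x, β (β' x) = x) (hβ'β : ∀ x, β' (β x) = x)
    (hφ : IsLinearMap K φ) (hψ : IsLinearMap K ψ)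
    (hφφ' : ∀ v, φ (φ' v) = v) (hφ'φ : ∀ v, φ' (φ v) = v)
    (hψψ' : ∀ v, ψ (ψ' v) = v) (hψ'ψ : ∀ v, ψ' (ψ v) = v)
    (hφψ : ∀ v, φ (ψ v) = ψ (φ v))
    (hρ1 : ∀ x, IsLinearMap K (ρ x)) (hρ2 : ∀ v, IsLinearMap K fun x => ρ x v) :
    IsBiHomRep K b α β ρ φ ψ ↔
      IsBiHomLie K
        (fun p q : A × V => (b p.1 q.1, ρ p.1 q.2 - ρ (α' (β q.1)) (φ (ψ' p.2))))
        (fun p => (α p.1, φ p.2)) (fun p => (β p.1, ψ p.2)) := by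
  obtain ⟨⟨hb1, hb2⟩, hα, hβ, hαβ, hαb, hβb, hsk, hjac⟩ := hb
  have cα : ∀ x, α' (β x) = β (α' x) := fun x => by
    rw [← hα'α (β (α' x)), hαβ, hαα']
  have cα3 : ∀ x, α' (β (α x)) = β x := fun x => by rw [← hαβ, hα'α]
  have cψ : ∀ v, φ (ψ' v) = ψ' (φ v) := fun v => by
    rw [← hψ'ψ (φ (ψ' v)), ← hφψ, hψψ']
  have hα'add : ∀ x y, α' (x + y) = α' x + α' y := fun x y => by
    rw [← hα'α (α' x + α' y), hα.map_add, hαα', hαα']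
  have hα'smul : ∀ (c : K) x, α' (c • x) = c • α' x := fun c x => by
    rw [← hα'α (c • α' x), hα.map_smul, hαα']
  have hψ'add : ∀ x y, ψ' (x + y) = ψ' x + ψ' y := fun x y => by
    rw [← hψ'ψ (ψ' x + ψ' y), hψ.map_add, hψψ', hψψ']
  have hψ'smul : ∀ (c : K) x, ψ' (c • x) = c • ψ' x := fun c x => by
    rw [← hψ'ψ (c • ψ' x), hψ.map_smul, hψψ']
  have hα'b : ∀ x y, α' (b x y) = b (α' x) (α' y) := fun x y => by
    rw [← hα'α (b (α' x) (α' y)), hαb, hαα', hαα']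
  have b1a : ∀ x y z, b (x + y) z = b x z + b y z := fun x y z => (hb1 z).map_add x y
  have b1s : ∀ (c : K) x z, b (c • x) z = c • b x z := fun c x z => (hb1 z).map_smul c x
  have b2a : ∀ x y z, b z (x + y) = b z x + b z y := fun x y z => (hb2 z).map_add x y
  have b2s : ∀ (c : K) x z, b z (c • x) = c • b z x := fun c x z => (hb2 z).map_smul c x
  have r2a : ∀ x y v, ρ (x + y) v = ρ x v + ρ y v := fun x y v => (hρ2 v).map_add x y
  have r2s : ∀ (c : K) x v, ρ (c • x) v = c • ρ x v := fun c x v => (hρ2 v).map_smul c x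
  have r1a : ∀ x u v, ρ x (u + v) = ρ x u + ρ x v := fun x u v => (hρ1 x).map_add u v
  have r1m : ∀ x u v, ρ x (u - v) = ρ x u - ρ x v := fun x u v => (hρ1 x).map_sub u v
  have r1s : ∀ x (c : K) v, ρ x (c • v) = c • ρ x v := fun x c v => (hρ1 x).map_smul c v
  have r10 : ∀ x, ρ x 0 = 0 := fun x => (hρ1 x).map_zero
  have φ0 : φ 0 = 0 := hφ.map_zero
  have ψ0 : ψ 0 = 0 := hψ.map_zero
  have ψ'0 : ψ' 0 = 0 := by simpa [ψ0] using hψ'ψ 0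
  constructor
  · rintro ⟨-, -, -, -, -, h1, h2, h3⟩
    refine ⟨⟨fun q => ⟨fun p p' => ?_, fun c p => ?_⟩, fun q => ⟨fun p p' => ?_, fun c p => ?_⟩⟩,
      ⟨fun p p' => ?_, fun c p => ?_⟩, ⟨fun p p' => ?_, fun c p => ?_⟩, fun p => ?_,
      fun p q => ?_, fun p q => ?_, fun p q => ?_, fun p q r => ?_⟩
    · ext <;> simp [b1a, r2a, hψ'add, hφ.map_add, r1a]; abel
    · ext <;> simp [b1s, r2s, hψ'smul, hφ.map_smul, r1s, smul_sub]
    · ext <;> simp [b2a, r2a, hα'add, hβ.map_add, r1a]; abel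
    · ext <;> simp [b2s, r2s, hα'smul, hβ.map_smul, r1s, smul_sub]
    · ext <;> simp [hα.map_add, hφ.map_add]
    · ext <;> simp [hα.map_smul, hφ.map_smul]
    · ext <;> simp [hβ.map_add, hψ.map_add]
    · ext <;> simp [hβ.map_smul, hψ.map_smul]
    · ext <;> simp [hαβ, hφψ]
    · ext
      · simp [hαb]
      · simp only [hφ.map_sub, ← h1, hαα', cα3, cψ]
    · ext
      · simp [hβb]
      · simp only [hψ.map_sub, ← h2, cα, cψ, hψψ', hψ'ψ]
    · ext
      · simpa using hsk p.1 q.1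
      · simp [cα3, hψ'ψ]
    · have key : ∀ x y w, ρ (b (β (β (α' x))) (β y)) (ψ (φ w)) =
          ρ (β (β x)) (ρ (β y) (φ w)) - ρ (β (β y)) (ρ (β x) (φ w)) := fun x y w => by
        rw [h3, hαβ, hαβ, hαα']
      ext
      · simpa using hjac p.1 q.1 r.1
      · simp only [Prod.snd_add, Prod.snd_zero, cα3, hψ'ψ, hα'b, hβb, hα'α, r1m, hφψ]
        simp only [cα, hα'α, key]
        abel
  · rintro ⟨-, -, -, -, h1, h2, -, h3⟩
    refine ⟨hφ, hψ, hφψ, hρ1, hρ2, fun x v => ?_, fun x v => ?_, fun x y v => ?_⟩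
    · have := congrArg Prod.snd (h1 (x, 0) (0, v))
      simpa [φ0, ψ'0, r10] using this.symm
    · have := congrArg Prod.snd (h2 (x, 0) (0, v))
      simpa [φ0, ψ0, ψ'0, r10] using this.symm
    · have := congrArg Prod.snd (h3 (β' (α x), 0) (β' y, 0) (0, φ' v))
      simp only [Prod.snd_add, Prod.snd_zero, cα3, hψ'ψ, hα'b, hβb, hα'α, r1m, hφψ, φ0, ψ0, ψ'0,
        r10, hββ', hφφ'] at this
      rw [hαβ, ← sub_eq_zero, ← neg_eq_zero, ← this]
      abel
end

section
/- Let (A,[·,·],α,β) and (V,{·,·},φ,ψ) be two regular BiHom-Lie algebras and ρ : A → gl(V) a linear map. Then (V,{·,·},ρ,φ,ψ) is an A-module K-algebra if and only if the direct sum A ⊕ V is a BiHom-Lie algebra under the bracket [x+u, y+v]_ρ = [x,y] + ρ(x)v − ρ(α⁻¹β(y))φψ⁻¹(u) + {u,v}, with structure maps (α+φ)(x+u) = α(x)+φ(u) and (β+ψ)(x+u) = β(x)+ψ(u). -/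
/-- semidirect sum characterization of `A`-module `K`-algebras. -/
theorem moduleKAlgebra_iff_semidirect {K A V : Type*} [Field K] [CharZero K]
    [AddCommGroup A] [Module K A] [AddCommGroup V] [Module K V]
    (b : A → A → A) (α β α' β' : A → A) (bv : V → V → V) (ρ : A → V → V)
    (φ ψ φ' ψ' : V → V)
    (hb : IsBiHomLie K b α β)
    (hαα' : ∀ x, α (α' x) = x) (hα'α : ∀ x, α' (α x) = x)
    (hββ' : ∀ x, β (β' x) = x) (hβ'β : ∀ x, β' (β x) = x)
    (hbv : IsBiHomLie K bv φ ψ)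
    (hφφ' : ∀ v, φ (φ' v) = v) (hφ'φ : ∀ v, φ' (φ v) = v)
    (hψψ' : ∀ v, ψ (ψ' v) = v) (hψ'ψ : ∀ v, ψ' (ψ v) = v)
    (hρ1 : ∀ x, IsLinearMap K (ρ x)) (hρ2 : ∀ v, IsLinearMap K fun x => ρ x v) :
    IsModuleKAlgebra K b α β bv ρ φ ψ ↔
      IsBiHomLie K
        (fun p q : A × V =>
          (b p.1 q.1, ρ p.1 q.2 - ρ (α' (β q.1)) (φ (ψ' p.2)) + bv p.2 q.2))
        (fun p => (α p.1, φ p.2)) (fun p => (β p.1, ψ p.2)) := by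
  obtain ⟨⟨hb1, hb2⟩, hαl, hβl, hc, hαb, hβb, hsk, hj⟩ := hb
  have hbv0 := hbv
  obtain ⟨⟨hv1, hv2⟩, hφl, hψl, hcv, hφb, hψb, hskv, hjv⟩ := hbv
  have hcα' : ∀ x, α' (β x) = β (α' x) := fun x => by
    rw [← hα'α (β (α' x)), hc, hαα']
  have hcψ' : ∀ v, ψ' (φ v) = φ (ψ' v) := fun v => by
    rw [← hψ'ψ (φ (ψ' v)), ← hcv, hψψ']
  have hα'b : ∀ x y, α' (b x y) = b (α' x) (α' y) := fun x y => by
    rw [← hα'α (b (α' x) (α' y)), hαb, hαα', hαα']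
  have hα'l : IsLinearMap K α' :=
    ⟨fun x y => by rw [← hα'α (α' x + α' y), hαl.map_add, hαα', hαα'],
     fun c x => by rw [← hα'α (c • α' x), hαl.map_smul, hαα']⟩
  have hψ'l : IsLinearMap K ψ' :=
    ⟨fun x y => by rw [← hψ'ψ (ψ' x + ψ' y), hψl.map_add, hψψ', hψψ'],
     fun c x => by rw [← hψ'ψ (c • ψ' x), hψl.map_smul, hψψ']⟩
  have b1a : ∀ x y z, b (x + y) z = b x z + b y z := fun x y z => (hb1 z).map_add x y
  have b1s : ∀ (c : K) x z, b (c • x) z = c • b x z := fun c x z => (hb1 z).map_smul c x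
  have b2a : ∀ z x y, b z (x + y) = b z x + b z y := fun z x y => (hb2 z).map_add x y
  have b2s : ∀ (c : K) z x, b z (c • x) = c • b z x := fun c z x => (hb2 z).map_smul c x
  have v1a : ∀ x y z, bv (x + y) z = bv x z + bv y z := fun x y z => (hv1 z).map_add x y
  have v1s : ∀ (c : K) x z, bv (c • x) z = c • bv x z := fun c x z => (hv1 z).map_smul c x
  have v2a : ∀ z x y, bv z (x + y) = bv z x + bv z y := fun z x y => (hv2 z).map_add x y
  have v2s : ∀ (c : K) z x, bv z (c • x) = c • bv z x := fun c z x => (hv2 z).map_smul c x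
  have r1a : ∀ x y z, ρ (x + y) z = ρ x z + ρ y z := fun x y z => (hρ2 z).map_add x y
  have r1s : ∀ (c : K) x z, ρ (c • x) z = c • ρ x z := fun c x z => (hρ2 z).map_smul c x
  have r2a : ∀ z x y, ρ z (x + y) = ρ z x + ρ z y := fun z x y => (hρ1 z).map_add x y
  have r2s : ∀ (c : K) z x, ρ z (c • x) = c • ρ z x := fun c z x => (hρ1 z).map_smul c x
  have v2sub : ∀ z x y, bv z (x - y) = bv z x - bv z y := fun z x y => (hv2 z).map_sub x y
  have r2sub : ∀ z x y, ρ z (x - y) = ρ z x - ρ z y := fun z x y => (hρ1 z).map_sub x y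
  have φsub : ∀ x y, φ (x - y) = φ x - φ y := fun x y => hφl.map_sub x y
  have ψsub : ∀ x y, ψ (x - y) = ψ x - ψ y := fun x y => hψl.map_sub x y
  have b10 : ∀ z, b 0 z = 0 := fun z => (hb1 z).map_zero
  have b20 : ∀ z, b z 0 = 0 := fun z => (hb2 z).map_zero
  have v10 : ∀ z, bv 0 z = 0 := fun z => (hv1 z).map_zero
  have v20 : ∀ z, bv z 0 = 0 := fun z => (hv2 z).map_zero
  have v2n : ∀ z x, bv z (-x) = - bv z x := fun z x => (hv2 z).map_neg x
  have r10 : ∀ z, ρ 0 z = 0 := fun z => (hρ2 z).map_zero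
  have r20 : ∀ z, ρ z 0 = 0 := fun z => (hρ1 z).map_zero
  have r2n : ∀ z x, ρ z (-x) = - ρ z x := fun z x => (hρ1 z).map_neg x
  constructor
  · rintro ⟨-, ⟨-, -, -, -, -, hρα, hρβ, hρb⟩, hd⟩
    refine ⟨⟨fun q => ⟨fun p p' => ?_, fun c p => ?_⟩, fun q => ⟨fun p p' => ?_, fun c p => ?_⟩⟩,
      ⟨fun p p' => ?_, fun c p => ?_⟩, ⟨fun p p' => ?_, fun c p => ?_⟩, fun p => ?_,
      fun p q => ?_, fun p q => ?_, fun p q => ?_, fun p q r => ?_⟩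
    · ext
      · simp [b1a]
      · simp only [Prod.fst_add, Prod.snd_add, hψ'l.map_add, hφl.map_add, r1a, r2a, v1a]; abel
    · ext
      · simp [b1s]
      · simp only [Prod.smul_fst, Prod.smul_snd, hψ'l.map_smul, hφl.map_smul, r1s, r2s, v1s,
          smul_add, smul_sub]
    · ext
      · simp [b2a]
      · simp only [Prod.fst_add, Prod.snd_add, hα'l.map_add, hβl.map_add, r1a, r2a, v2a]; abel
    · ext
      · simp [b2s]
      · simp only [Prod.smul_fst, Prod.smul_snd, hα'l.map_smul, hβl.map_smul, r1s, r2s, v2s,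
          smul_add, smul_sub]
    · simp [hαl.map_add, hφl.map_add]
    · simp [hαl.map_smul, hφl.map_smul]
    · simp [hβl.map_add, hψl.map_add]
    · simp [hβl.map_smul, hψl.map_smul]
    · simp [hc, hcv]
    · ext
      · exact hαb _ _
      · simp only [hφl.map_add, φsub, hφb, ← hρα, hcα', hc, hαα', hα'α, hcψ']
    · ext
      · exact hβb _ _
      · simp only [hψl.map_add, ψsub, hψb, ← hρβ, hcα', ← hcv, hψψ', hψ'ψ]
    · ext
      · exact hsk _ _
      · have := hskv p.2 q.2
        simp only [Prod.snd_neg, hψ'ψ, hcα', hα'α, ← hc, this]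
        abel
    · obtain ⟨x, u⟩ := p
      obtain ⟨y, v⟩ := q
      obtain ⟨z, w⟩ := r
      have key1 : ∀ x y w, ρ (α' (β (b (β x) (α y)))) (φ (ψ w))
          = ρ (β (β x)) (ρ (β y) (φ w)) - ρ (β (β y)) (ρ (β x) (φ w)) := fun x y w => by
        have h := hρb (α' (β x)) (β y) (φ w)
        rw [hαα', hc, hαα'] at h
        rw [hβb, hα'b, hcα' (β x), hcα' (α y), hα'α, hcv, h]
      have key2 : ∀ x u v, ρ (β (β x)) (bv (ψ u) (φ v))
          = bv (ψ (ψ u)) (ρ (β x) (φ v)) - bv (ψ (ψ v)) (ρ (β x) (φ u)) := fun x u v => by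
        have h := hd (α' (β x)) (ψ u) (φ v)
        have h2 := hskv (ρ (α' (β x)) u) (ψ v)
        rw [← hρβ, ← hρα, hαα', hcv] at h2
        rw [hc, hαα', h2] at h
        rw [h]; abel
      have e : ∀ x, α' (β (α x)) = β x := fun x => by rw [← hc, hα'α]
      ext
      · exact hj x y z
      · simp only [Prod.snd_add, Prod.snd_zero, hψ'ψ, e, key1, r2a, r2sub, v2a, v2sub, key2]
        have := hjv u v w
        linear_combination (norm := abel) this
  · rintro ⟨-, -, -, -, hA, hB, -, hJ⟩
    have hρα : ∀ x v, ρ (α x) (φ v) = φ (ρ x v) := fun x v => by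
      have := congrArg Prod.snd (hA (x, 0) (0, v))
      simpa [hφl.map_zero, hψ'l.map_zero, hψl.map_zero, hα'l.map_zero, hβl.map_zero,
        r10, r20, v10, v20, hαl.map_zero] using this.symm
    have hρβ : ∀ x v, ρ (β x) (ψ v) = ψ (ρ x v) := fun x v => by
      have := congrArg Prod.snd (hB (x, 0) (0, v))
      simpa [hφl.map_zero, hψ'l.map_zero, hψl.map_zero, hα'l.map_zero, hβl.map_zero,
        r10, r20, v10, v20, hαl.map_zero] using this.symm
    have e : ∀ x, α' (β (α x)) = β x := fun x => by rw [← hc, hα'α]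
    refine ⟨hbv0, ⟨hφl, hψl, hcv, hρ1, hρ2, hρα, hρβ, fun x y v => ?_⟩, fun x u v => ?_⟩
    · have := congrArg Prod.snd (hJ (β' (α x), 0) (β' y, 0) (0, φ' v))
      simp only [hφl.map_zero, hψ'l.map_zero, hψl.map_zero, hα'l.map_zero, hβl.map_zero,
        r10, r20, v10, v20, b10, b20, hαl.map_zero, hψ'ψ, e, hββ', hφφ', Prod.snd_add,
        Prod.snd_zero, sub_zero, add_zero, zero_sub, zero_add, r2n, hβb, hα'b] at this
      rw [hcv, hφφ', ← hc] at this
      linear_combination (norm := abel) -this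
    · have := congrArg Prod.snd (hJ (β' (α x), 0) (0, ψ' u) (0, φ' v))
      simp only [hφl.map_zero, hψ'l.map_zero, hψl.map_zero, hα'l.map_zero, hβl.map_zero,
        r10, r20, v10, v20, b10, b20, hαl.map_zero, hψ'ψ, e, hββ', hφφ', hψψ', Prod.snd_add,
        Prod.snd_zero, sub_zero, add_zero, zero_sub, zero_add, r2n, v2n, ← hc, hα'α] at this
      have h2 := hskv (ρ x (ψ' u)) (ψ (φ' v))
      rw [← hρβ, ← hρα, hψψ', hcv, hφφ'] at h2
      rw [h2]
      linear_combination (norm := abel) this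
end

section
/- Let (A,[·,·],▷) be a (left) post-Lie algebra over a field K of characteristic zero and let α, β : A → A be two commuting post-Lie algebra morphisms (i.e., each preserves both [·,·] and ▷). Then (A,[·,·]_{α,β},▷_{α,β},α,β) is a BiHom-post-Lie algebra, where [x,y]_{α,β} = [α(x),β(y)] and x ▷_{α,β} y = α(x) ▷ β(y). -/
/-- twisting a post-Lie algebra by two commuting morphisms yields
a BiHom-post-Lie algebra. -/
theorem biHomPostLie_of_twisted_postLie {K A : Type*} [Field K] [CharZero K]
    [AddCommGroup A] [Module K A] (b t : A → A → A) (α β : A → A)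
    (h : IsPostLie K b t)
    (hα : IsLinearMap K α) (hβ : IsLinearMap K β)
    (hαb : ∀ x y, α (b x y) = b (α x) (α y))
    (hβb : ∀ x y, β (b x y) = b (β x) (β y))
    (hαt : ∀ x y, α (t x y) = t (α x) (α y))
    (hβt : ∀ x y, β (t x y) = t (β x) (β y))
    (hcomm : ∀ x, α (β x) = β (α x)) :
    IsBiHomPostLie K (fun x y => b (α x) (β y)) (fun x y => t (α x) (β y)) α β := by
  obtain ⟨⟨⟨hb1, hb2⟩, hskew, hjac⟩, ⟨ht1, ht2⟩, hder, hpost⟩ := h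
  refine ⟨⟨⟨fun y => ⟨fun u v => ?_, fun c u => ?_⟩, fun x => ⟨fun u v => ?_, fun c u => ?_⟩⟩,
    hα, hβ, hcomm, fun x y => ?_, fun x y => ?_, fun x y => ?_, fun x y z => ?_⟩,
    ⟨fun y => ⟨fun u v => ?_, fun c u => ?_⟩, fun x => ⟨fun u v => ?_, fun c u => ?_⟩⟩,
    fun x y => ?_, fun x y => ?_, fun x y z => ?_, fun x y z => ?_⟩
  · simp only [hα.map_add]; exact (hb1 (β y)).map_add _ _
  · simp only [hα.map_smul]; exact (hb1 (β y)).map_smul _ _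
  · simp only [hβ.map_add]; exact (hb2 (α x)).map_add _ _
  · simp only [hβ.map_smul]; exact (hb2 (α x)).map_smul _ _
  · simp only [hαb, hcomm]
  · simp only [hβb, hcomm]
  · simp only [hcomm]; exact hskew _ _
  · simp only [hβb, hcomm]; exact hjac _ _ _
  · simp only [hα.map_add]; exact (ht1 (β y)).map_add _ _
  · simp only [hα.map_smul]; exact (ht1 (β y)).map_smul _ _
  · simp only [hβ.map_add]; exact (ht2 (α x)).map_add _ _
  · simp only [hβ.map_smul]; exact (ht2 (α x)).map_smul _ _
  · simp only [hαt, hcomm]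
  · simp only [hβt, hcomm]
  · simp only [hβb, hαt, hβt, hcomm]; exact hder _ _ _
  · simp only [hαb, hαt, hβt, hcomm]; exact hpost _ _ _
end

section
/- Let (A,[·,·],▷,α,β) be a regular BiHom-post-Lie algebra over a field K of characteristic zero. Then the bracket {x,y} = x ▷ y − α⁻¹β(y) ▷ αβ⁻¹(x) + [x,y] defines a BiHom-Lie algebra structure (A,{·,·},α,β) on A (called the sub-adjacent BiHom-Lie algebra of A). -/
/-- the sub-adjacent BiHom-Lie algebra of a regular
BiHom-post-Lie algebra. -/
theorem subAdjacent_of_biHomPostLie {K A : Type*} [Field K] [CharZero K]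
    [AddCommGroup A] [Module K A] (b t : A → A → A) (α β α' β' : A → A)
    (h : IsBiHomPostLie K b t α β)
    (hαα' : ∀ x, α (α' x) = x) (hα'α : ∀ x, α' (α x) = x)
    (hββ' : ∀ x, β (β' x) = x) (hβ'β : ∀ x, β' (β x) = x) :
    IsBiHomLie K (fun x y => t x y - t (α' (β y)) (α (β' x)) + b x y) α β := by
  obtain ⟨⟨hb, hα, hβ, hc, hαb, hβb, hsk, hjac⟩, ht, hαt, hβt, hder, hpl⟩ := h
  have hc' : ∀ x, β (α x) = α (β x) := fun x => (hc x).symm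
  have hα'β : ∀ x, α' (β x) = β (α' x) := fun x => by
    rw [← hα'α (β (α' x)), hc, hαα']
  have hβ'α : ∀ x, β' (α x) = α (β' x) := fun x => by
    rw [← hβ'β (α (β' x)), hc', hββ']
  have key : ∀ f : A → A → A, (∀ x y, α (f x y) = f (α x) (α y)) →
      (∀ x y, β (f x y) = f (β x) (β y)) → IsBilin K f → ∃ g : A → A → A,
      (∀ x y, f x y = g (α x) (β y)) ∧ (∀ x y, α (g x y) = g (α x) (α y)) ∧
      (∀ x y, β (g x y) = g (β x) (β y)) ∧
      (∀ x y z, g (x + y) z = g x z + g y z) ∧ (∀ x y z, g x (y + z) = g x y + g x z) ∧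
      (∀ (c : K) x y, g (c • x) y = c • g x y) ∧ (∀ (c : K) x y, g x (c • y) = c • g x y) := by
    intro f h1 h2 h3
    have a1 : ∀ x y, α' (x + y) = α' x + α' y := fun x y => by
      rw [← hα'α (α' x + α' y), hα.map_add, hαα', hαα']
    have a2 : ∀ x y, β' (x + y) = β' x + β' y := fun x y => by
      rw [← hβ'β (β' x + β' y), hβ.map_add, hββ', hββ']
    have a3 : ∀ (c : K) x, α' (c • x) = c • α' x := fun c x => by
      rw [← hα'α (c • α' x), hα.map_smul, hαα']
    have a4 : ∀ (c : K) x, β' (c • x) = c • β' x := fun c x => by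
      rw [← hβ'β (c • β' x), hβ.map_smul, hββ']
    refine ⟨fun x y => f (α' x) (β' y), ?_, ?_, ?_, ?_, ?_, ?_, ?_⟩
    · intro x y; simp only [hα'α, hβ'β]
    · intro x y; simp only [h1, hα'α, hαα', hβ'α]
    · intro x y; simp only [h2, hβ'β, hββ', hα'β]
    · intro x y z; simp only [a1]; exact (h3.1 _).map_add _ _
    · intro x y z; simp only [a2]; exact (h3.2 _).map_add _ _
    · intro c x y; simp only [a3]; exact (h3.1 _).map_smul _ _
    · intro c x y; simp only [a4]; exact (h3.2 _).map_smul _ _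
  obtain ⟨t0, T, hαt0, hβt0, t1, t2, t3, t4⟩ := key t hαt hβt ht
  obtain ⟨b0, B, hαb0, hβb0, b1, b2, b3, b4⟩ := key b hαb hβb hb
  simp only [T, B, hαt0, hβt0, hαb0, hβb0, hc'] at hsk hjac hder hpl
  have S1 : ∀ x, ∃ y, α (β y) = x := fun x => ⟨β' (α' x), by rw [hββ', hαα']⟩
  have S2 : ∀ x, ∃ y, α (α (β y)) = x := fun x =>
    ⟨β' (α' (α' x)), by rw [hββ', hαα', hαα']⟩
  have S3 : ∀ x, ∃ y, α (β (β y)) = x := fun x =>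
    ⟨β' (β' (α' x)), by rw [hββ', hββ', hαα']⟩
  have S4 : ∀ x, ∃ y, β (β y) = x := fun x => ⟨β' (β' x), by rw [hββ', hββ']⟩
  have sk : ∀ x y, b0 x y = - b0 y x := by
    intro x y
    obtain ⟨x, rfl⟩ := S1 x
    obtain ⟨y, rfl⟩ := S1 y
    exact hsk x y
  have jac : ∀ x y z, b0 x (b0 y z) + b0 y (b0 z x) + b0 z (b0 x y) = 0 := by
    intro x y z
    obtain ⟨x, rfl⟩ := S3 x
    obtain ⟨y, rfl⟩ := S3 y
    obtain ⟨z, rfl⟩ := S3 z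
    exact hjac x y z
  have der : ∀ x y z, t0 x (b0 y z) = b0 (t0 x y) z + b0 y (t0 x z) := by
    intro x y z
    obtain ⟨x, rfl⟩ := S2 x
    obtain ⟨y, rfl⟩ := S1 y
    obtain ⟨z, rfl⟩ := S4 z
    exact hder x y z
  have pl : ∀ x y z, t0 (b0 x y) z =
      (t0 x (t0 y z) - t0 (t0 x y) z) - (t0 y (t0 x z) - t0 (t0 y x) z) := by
    intro x y z
    obtain ⟨x, rfl⟩ := S2 x
    obtain ⟨y, rfl⟩ := S2 y
    obtain ⟨z, rfl⟩ := S4 z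
    exact hpl x y z
  have E : (fun x y => t x y - t (α' (β y)) (α (β' x)) + b x y) =
      fun x y => t0 (α x) (β y) - t0 (β y) (α x) + b0 (α x) (β y) := by
    funext x y
    simp only [T, B, hαα', hc', hββ']
  rw [E]
  have αs : ∀ x y, α (x - y) = α x - α y := hα.map_sub
  have βs : ∀ x y, β (x - y) = β x - β y := hβ.map_sub
  have ts1 : ∀ x y z, t0 (x - y) z = t0 x z - t0 y z := fun x y z => by
    rw [eq_sub_iff_add_eq, ← t1, sub_add_cancel]
  have ts2 : ∀ x y z, t0 x (y - z) = t0 x y - t0 x z := fun x y z => by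
    rw [eq_sub_iff_add_eq, ← t2, sub_add_cancel]
  have bs1 : ∀ x y z, b0 (x - y) z = b0 x z - b0 y z := fun x y z => by
    rw [eq_sub_iff_add_eq, ← b1, sub_add_cancel]
  have bs2 : ∀ x y z, b0 x (y - z) = b0 x y - b0 x z := fun x y z => by
    rw [eq_sub_iff_add_eq, ← b2, sub_add_cancel]
  refine ⟨⟨fun y => ⟨fun u v => ?_, fun c u => ?_⟩, fun y => ⟨fun u v => ?_, fun c u => ?_⟩⟩,
    hα, hβ, hc, ?_, ?_, ?_, ?_⟩
  · simp only [hα.map_add, t1, t2, b1]; abel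
  · simp only [hα.map_smul, t3, t4, b3, smul_add, smul_sub]
  · simp only [hβ.map_add, t1, t2, b2]; abel
  · simp only [hβ.map_smul, t3, t4, b4, smul_add, smul_sub]
  · intro x y
    simp only [hα.map_add, αs, hαt0, hαb0, hc']
  · intro x y
    simp only [hβ.map_add, βs, hβt0, hβb0, hc']
  · intro x y
    simp only [hc']
    rw [sk (α (β x))]; abel
  · intro x y z
    simp only [hβ.map_add, βs, hβt0, hβb0, hc']
    generalize α (β (β x)) = x
    generalize α (β (β y)) = y
    generalize α (β (β z)) = z
    simp only [t1, t2, b1, b2, ts1, ts2, bs1, bs2, der, pl]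
    rw [sk (t0 x y) z, sk (t0 y z) x, sk (t0 z x) y]
    have J := jac x y z
    rw [← J, ← sub_eq_zero]
    abel_nf
end

section
/- Let (A,[·,·],▷,α,β) be a regular BiHom-post-Lie algebra over a field K of characteristic zero. Define x ∘ y = x ▷ y + (1/2)[x,y] for all x,y ∈ A. Then (A,∘,α,β) is an admissible BiHom-Lie algebra, i.e., the bracket [x,y]' = x ∘ y − α⁻¹β(y) ∘ αβ⁻¹(x) makes (A,[·,·]',α,β) a BiHom-Lie algebra. -/
theorem aux_sub_adj {K A : Type*} [Field K]
    [AddCommGroup A] [Module K A] (b t : A → A → A) (h : IsPostLie K b t) :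
    IsLieBracket K (fun x y => t x y - t y x + b x y) := by
  obtain ⟨⟨⟨bl, br⟩, bs, bj⟩, ⟨tl, tr⟩, h1, h2⟩ := h
  have bla := fun x x' y => (bl y).map_add x x'
  have bra := fun x y y' => (br x).map_add y y'
  have tla := fun x x' y => (tl y).map_add x x'
  have tra := fun x y y' => (tr x).map_add y y'
  have bls := fun x x' y => (bl y).map_sub x x'
  have brs := fun x y y' => (br x).map_sub y y'
  have tls := fun x x' y => (tl y).map_sub x x'
  have trs := fun x y y' => (tr x).map_sub y y'
  have blm := fun (c : K) x y => (bl y).map_smul c x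
  have brm := fun (c : K) x y => (br x).map_smul c y
  have tlm := fun (c : K) x y => (tl y).map_smul c x
  have trm := fun (c : K) x y => (tr x).map_smul c y
  refine ⟨⟨fun y => ⟨fun x x' => ?_, fun c x => ?_⟩,
    fun x => ⟨fun y y' => ?_, fun c y => ?_⟩⟩, fun x y => ?_, fun x y z => ?_⟩
  · simp only [bla, tla, tra]; abel
  · simp only [blm, tlm, trm, smul_add, smul_sub]
  · simp only [bra, tla, tra]; abel
  · simp only [brm, tlm, trm, smul_add, smul_sub]
  · simp only [bs x y]; abel
  · simp only [bra, brs, tla, tls, tra, trs, h1, h2]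
    rw [bs (t x y) z, bs (t y z) x, bs (t z x) y]
    have := bj x y z
    rw [← this]
    abel

theorem aux_twist {K A : Type*} [Field K]
    [AddCommGroup A] [Module K A] (C : A → A → A) (α β : A → A)
    (h : IsLieBracket K C) (la : IsLinearMap K α) (lb : IsLinearMap K β)
    (hc : ∀ x, α (β x) = β (α x))
    (ha : ∀ x y, α (C x y) = C (α x) (α y)) (hb : ∀ x y, β (C x y) = C (β x) (β y)) :
    IsBiHomLie K (fun x y => C (α x) (β y)) α β := by
  obtain ⟨⟨bl, br⟩, bs, bj⟩ := h
  refine ⟨⟨fun y => ⟨fun x x' => ?_, fun c x => ?_⟩,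
    fun x => ⟨fun y y' => ?_, fun c y => ?_⟩⟩, la, lb, hc,
    fun x y => ?_, fun x y => ?_, fun x y => ?_, fun x y z => ?_⟩
  · simp only [la.map_add]; exact (bl _).map_add _ _
  · simp only [la.map_smul]; exact (bl _).map_smul _ _
  · simp only [lb.map_add]; exact (br _).map_add _ _
  · simp only [lb.map_smul]; exact (br _).map_smul _ _
  · simp only [ha, hc]
  · simp only [hb, hc]
  · simp only [hc]; exact bs _ _
  · simp only [hc, hb]; exact bj _ _ _

theorem aux_untwist {K A : Type*} [Field K]
    [AddCommGroup A] [Module K A] (B T : A → A → A) (α β : A → A)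
    (sa : Function.Surjective α) (sb : Function.Surjective β)
    (lB : IsBilin K B) (lT : IsBilin K T)
    (hc : ∀ x, α (β x) = β (α x))
    (ha : ∀ x y, α (B x y) = B (α x) (α y)) (hb : ∀ x y, β (B x y) = B (β x) (β y))
    (ta : ∀ x y, α (T x y) = T (α x) (α y)) (tb : ∀ x y, β (T x y) = T (β x) (β y))
    (h : IsBiHomPostLie K (fun x y => B (α x) (β y)) (fun x y => T (α x) (β y)) α β) :
    IsPostLie K B T := by
  obtain ⟨⟨_, _, _, _, _, _, bs, bj⟩, _, _, _, h1, h2⟩ := h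
  simp only [hc, ha, hb, ta, tb] at bs bj h1 h2
  have s1 : ∀ x, ∃ u, β (α u) = x := (sb.comp sa)
  have s2 : ∀ x, ∃ u, β (β (α u)) = x := (sb.comp (sb.comp sa))
  have s3 : ∀ x, ∃ u, β (α (α u)) = x := (sb.comp (sa.comp sa))
  have s4 : ∀ x, ∃ u, β (β u) = x := (sb.comp sb)
  refine ⟨⟨lB, fun x y => ?_, fun x y z => ?_⟩, lT, fun x y z => ?_, fun x y z => ?_⟩
  · obtain ⟨x, rfl⟩ := s1 x
    obtain ⟨y, rfl⟩ := s1 y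
    exact bs x y
  · obtain ⟨x, rfl⟩ := s2 x
    obtain ⟨y, rfl⟩ := s2 y
    obtain ⟨z, rfl⟩ := s2 z
    exact bj x y z
  · obtain ⟨x, rfl⟩ := s3 x
    obtain ⟨y, rfl⟩ := s1 y
    obtain ⟨z, rfl⟩ := s4 z
    exact h1 x y z
  · obtain ⟨x, rfl⟩ := s3 x
    obtain ⟨y, rfl⟩ := s3 y
    obtain ⟨z, rfl⟩ := s4 z
    exact h2 x y z

theorem aux_bilin {K A : Type*} [Field K]
    [AddCommGroup A] [Module K A] (b : A → A → A) (f g : A → A)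
    (h : IsBilin K b) (hf : IsLinearMap K f) (hg : IsLinearMap K g) :
    IsBilin K (fun x y => b (f x) (g y)) := by
  obtain ⟨bl, br⟩ := h
  refine ⟨fun y => ⟨fun x x' => ?_, fun c x => ?_⟩,
    fun x => ⟨fun y y' => ?_, fun c y => ?_⟩⟩
  · simp only [hf.map_add]; exact (bl _).map_add _ _
  · simp only [hf.map_smul]; exact (bl _).map_smul _ _
  · simp only [hg.map_add]; exact (br _).map_add _ _
  · simp only [hg.map_smul]; exact (br _).map_smul _ _

theorem aux_inv {K A : Type*} [Field K]
    [AddCommGroup A] [Module K A] (f g : A → A) (hf : IsLinearMap K f)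
    (h1 : ∀ x, f (g x) = x) (h2 : ∀ x, g (f x) = x) : IsLinearMap K g :=
  ⟨fun x y => by rw [← h2 (g x + g y), hf.map_add, h1, h1],
   fun c x => by rw [← h2 (c • g x), hf.map_smul, h1]⟩

/-- a regular BiHom-post-Lie algebra gives an admissible
BiHom-Lie algebra via `x ∘ y = x ▷ y + (1/2)[x,y]`. -/
theorem admissible_of_biHomPostLie {K A : Type*} [Field K] [CharZero K]
    [AddCommGroup A] [Module K A] (b t : A → A → A) (α β α' β' : A → A)
    (h : IsBiHomPostLie K b t α β)
    (hαα' : ∀ x, α (α' x) = x) (hα'α : ∀ x, α' (α x) = x)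
    (hββ' : ∀ x, β (β' x) = x) (hβ'β : ∀ x, β' (β x) = x) :
    IsBiHomLie K
      (fun x y =>
        (t x y + (1 / 2 : K) • b x y) -
          (t (α' (β y)) (α (β' x)) + (1 / 2 : K) • b (α' (β y)) (α (β' x))))
      α β := by
  have h0 := h
  obtain ⟨⟨lb, la, lbe, hc, ba, bb, bs, bj⟩, lt, ta, tb, h1, h2⟩ := h0
  have c1 : ∀ x, α (β' x) = β' (α x) := fun x => by
    rw [← hβ'β (α (β' x)), ← hc, hββ']
  have c2 : ∀ x, α' (β x) = β (α' x) := fun x => by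
    rw [← hα'α (β (α' x)), hc, hαα']
  have la' := aux_inv α α' la hαα' hα'α
  have lb' := aux_inv β β' lbe hββ' hβ'β
  have key : IsPostLie K (fun x y => b (α' x) (β' y)) (fun x y => t (α' x) (β' y)) := by
    apply aux_untwist _ _ α β (fun x => ⟨_, hαα' x⟩) (fun x => ⟨_, hββ' x⟩)
      (aux_bilin _ _ _ lb la' lb') (aux_bilin _ _ _ lt la' lb') hc
    · intro x y; simp only [ba, hαα', hα'α, c1]
    · intro x y; simp only [bb, hββ', hβ'β, c2]
    · intro x y; simp only [ta, hαα', hα'α, c1]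
    · intro x y; simp only [tb, hββ', hβ'β, c2]
    · simpa only [hα'α, hβ'β] using h
  have key2 := aux_twist _ α β (aux_sub_adj _ _ key) la lbe hc
    (by intro x y; simp only [ba, ta, la.map_add, la.map_sub, hαα', hα'α, c1])
    (by intro x y; simp only [bb, tb, lbe.map_add, lbe.map_sub, hββ', hβ'β, c2])
  convert key2 using 3 with x y
  simp only [hα'α, hβ'β]
  have e : b (α' (β y)) (α (β' x)) = - b x y := by
    have := key.1.2.1 (β y) (α x)
    simpa only [hα'α, hβ'β, c1] using this
  rw [e, c1, smul_neg]
  have e2 : b x y = (1 / 2 : K) • b x y + (1 / 2 : K) • b x y := by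
    rw [← add_smul]; norm_num
  nth_rewrite 3 [e2]
  abel
end

section
/- Let (A,[·,·],▷,α,β) be a regular BiHom-post-Lie algebra over a field K of characteristic zero and let L_▷ : A → gl(A) be defined by L_▷(x)(y) = x ▷ y. Then (A, L_▷, α, β) is a representation of the sub-adjacent BiHom-Lie algebra (A,{·,·},α,β), where {x,y} = x ▷ y − α⁻¹β(y) ▷ αβ⁻¹(x) + [x,y]. -/
/-- `L_▷` is a representation of the sub-adjacent BiHom-Lie
algebra of a regular BiHom-post-Lie algebra. -/
theorem leftMul_rep_of_biHomPostLie {K A : Type*} [Field K] [CharZero K]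
    [AddCommGroup A] [Module K A] (b t : A → A → A) (α β α' β' : A → A)
    (h : IsBiHomPostLie K b t α β)
    (hαα' : ∀ x, α (α' x) = x) (hα'α : ∀ x, α' (α x) = x)
    (hββ' : ∀ x, β (β' x) = x) (hβ'β : ∀ x, β' (β x) = x) :
    IsBiHomRep K (fun x y => t x y - t (α' (β y)) (α (β' x)) + b x y) α β
      (fun x y => t x y) α β := by
  obtain ⟨⟨_, hα, hβ, hc, _, _, _, _⟩, ⟨ht1, ht2⟩, hta, htb, _, has⟩ := h
  refine ⟨hα, hβ, hc, ht2, ht1, fun x v => (hta x v).symm, fun x v => (htb x v).symm, ?_⟩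
  intro x y v
  obtain ⟨w, rfl⟩ : ∃ w, y = α w := ⟨α' y, (hαα' y).symm⟩
  have hadd : ∀ p q z, t (p + q) z = t p z + t q z := fun p q z => (ht1 z).map_add p q
  have hsub : ∀ p q z, t (p - q) z = t p z - t q z := fun p q z => (ht1 z).map_sub p q
  simp only [hα'α, hβ'β, hadd, hsub, has, ← hc]
  abel
end

section
/- Let (A,[·,·],▷,α,β) be a regular BiHom-post-Lie algebra over a field K of characteristic zero. Define x ▶ y = x ▷ y + [x,y]. Then (A,−[·,·],▶,α,β) is also a BiHom-post-Lie algebra, and (A,[·,·],▷,α,β) and (A,−[·,·],▶,α,β) have the same sub-adjacent BiHom-Lie algebra, i.e., x ▶ y − α⁻¹β(y) ▶ αβ⁻¹(x) − [x,y] = x ▷ y − α⁻¹β(y) ▷ αβ⁻¹(x) + [x,y] for all x,y ∈ A. -/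
/-- `(A, -[·,·], ▶, α, β)` with `x ▶ y = x ▷ y + [x,y]` is a
BiHom-post-Lie algebra with the same sub-adjacent BiHom-Lie algebra. -/
theorem black_biHomPostLie {K A : Type*} [Field K] [CharZero K]
    [AddCommGroup A] [Module K A] (b t : A → A → A) (α β α' β' : A → A)
    (h : IsBiHomPostLie K b t α β)
    (hαα' : ∀ x, α (α' x) = x) (hα'α : ∀ x, α' (α x) = x)
    (hββ' : ∀ x, β (β' x) = x) (hβ'β : ∀ x, β' (β x) = x) :
    IsBiHomPostLie K (fun x y => - b x y) (fun x y => t x y + b x y) α β ∧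
      (∀ x y,
        (t x y + b x y) -
            (t (α' (β y)) (α (β' x)) + b (α' (β y)) (α (β' x))) - b x y =
          t x y - t (α' (β y)) (α (β' x)) + b x y) := by
  obtain ⟨⟨⟨hb1, hb2⟩, hα, hβ, hc, hab, hbb, hsk, hj⟩, ⟨ht1, ht2⟩, hat, hbt, hd, hp⟩ := h
  have hαn : ∀ x, α (-x) = - α x := fun x => hα.map_neg x
  have hβn : ∀ x, β (-x) = - β x := fun x => hβ.map_neg x
  have bnl : ∀ x y, b (-x) y = - b x y := fun x y => (hb1 y).map_neg x
  have bnr : ∀ x y, b x (-y) = - b x y := fun x y => (hb2 x).map_neg y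
  have tnl : ∀ x y, t (-x) y = - t x y := fun x y => (ht1 y).map_neg x
  have tnr : ∀ x y, t x (-y) = - t x y := fun x y => (ht2 x).map_neg y
  have bal : ∀ x x' y, b (x + x') y = b x y + b x' y := fun x x' y => (hb1 y).map_add x x'
  have bar : ∀ x y y', b x (y + y') = b x y + b x y' := fun x y y' => (hb2 x).map_add y y'
  have tal : ∀ x x' y, t (x + x') y = t x y + t x' y := fun x x' y => (ht1 y).map_add x x'
  have tar : ∀ x y y', t x (y + y') = t x y + t x y' := fun x y y' => (ht2 x).map_add y y'
  have hc1 : ∀ x, β (α' x) = α' (β x) := fun x => by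
    rw [← hα'α (β (α' x)), hc, hαα']
  have hL : ∀ x y z, b (α (β x)) (b y z) = b (b (β x) y) (β z) + b (β y) (b (α x) z) := by
    intro x y z
    obtain ⟨w, rfl⟩ : ∃ w, x = β w := ⟨β' x, (hββ' x).symm⟩
    obtain ⟨u, rfl⟩ : ∃ u, y = β u := ⟨β' y, (hββ' y).symm⟩
    obtain ⟨v, rfl⟩ : ∃ v, z = α v := ⟨α' z, (hαα' z).symm⟩
    have h1 := hj (α w) u v
    have h2 := hsk v (α w)
    have h3 := hsk (β v) (b (β w) u)
    simp only [hab, hbb, hc] at h1 h2 h3 ⊢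
    rw [h2, h3, bnr] at h1
    rw [← sub_eq_zero, ← h1]
    abel
  refine ⟨⟨⟨⟨?_, ?_⟩, hα, hβ, hc, ?_, ?_, ?_, ?_⟩, ⟨?_, ?_⟩, ?_, ?_, ?_, ?_⟩, ?_⟩
  · intro y
    exact ⟨fun u v => by simp only [bal]; abel, fun c u => by
      simp only [(hb1 y).map_smul c u, smul_neg]⟩
  · intro x
    exact ⟨fun u v => by simp only [bar]; abel, fun c u => by
      simp only [(hb2 x).map_smul c u, smul_neg]⟩
  · intro x y; simp only [hαn, hab]
  · intro x y; simp only [hβn, hbb]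
  · intro x y; simp only [hsk x y]
  · intro x y z; simp only [bnr, neg_neg]; exact hj x y z
  · intro y
    exact ⟨fun u v => by simp only [bal, tal]; abel, fun c u => by
      simp only [(hb1 y).map_smul c u, (ht1 y).map_smul c u, smul_add]⟩
  · intro x
    exact ⟨fun u v => by simp only [bar, tar]; abel, fun c u => by
      simp only [(hb2 x).map_smul c u, (ht2 x).map_smul c u, smul_add]⟩
  · intro x y; simp only [hα.map_add, hab, hat]
  · intro x y; simp only [hβ.map_add, hbb, hbt]
  · intro x y z
    simp only [bnr, tnr, bal, bar, hd, hL]; abel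
  · intro x y z
    simp only [bnl, tnl, bal, bar, tal, tar, hd x (α y) z, hd y (α x) z, hL x (α y) z, hp, hsk y x]
    simp only [hc]
    abel
  · intro x y
    have h1 := hsk (β' x) (α' y)
    rw [hββ', hαα', hc1] at h1
    rw [h1]; abel
end

section
/- Let (A,[·,·],▷,α,β) be a regular BiHom-post-Lie algebra over a field K of characteristic zero. Define a bracket on A × A by ⟦(a,x),(b,y)⟧ = (a ▷ b − α⁻¹β(b) ▷ αβ⁻¹(a) + [a,b], a ▷ y − α⁻¹β(b) ▷ αβ⁻¹(x) + [x,y]). Then (A × A, ⟦·,·⟧, α×α, β×β) is a BiHom-Lie algebra. -/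
/-- The double bracket of a post-Lie algebra satisfies the Jacobi identity. -/
theorem double_jacobi {K A : Type*} [Field K] [AddCommGroup A] [Module K A]
    (b t : A → A → A) (h : IsPostLie K b t) (x y z x' y' z' : A) :
    ((t x (t y z' - t z y' + b y' z') - t (t y z - t z y + b y z) x' +
        b x' (t y z' - t z y' + b y' z')) +
      (t y (t z x' - t x z' + b z' x') - t (t z x - t x z + b z x) y' +
        b y' (t z x' - t x z' + b z' x'))) +
      (t z (t x y' - t y x' + b x' y') - t (t x y - t y x + b x y) z' +
        b z' (t x y' - t y x' + b x' y')) = 0 := by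
  obtain ⟨⟨⟨bl, br⟩, hs, hj⟩, ⟨tl, tr⟩, h1, h2⟩ := h
  have ba : ∀ u v w, b w (u + v) = b w u + b w v := fun u v w => (br w).map_add u v
  have bs : ∀ u v w, b w (u - v) = b w u - b w v := fun u v w => (br w).map_sub u v
  have ta : ∀ u v w, t w (u + v) = t w u + t w v := fun u v w => (tr w).map_add u v
  have ts : ∀ u v w, t w (u - v) = t w u - t w v := fun u v w => (tr w).map_sub u v
  have la : ∀ u v w, t (u + v) w = t u w + t v w := fun u v w => (tl w).map_add u v
  have ls : ∀ u v w, t (u - v) w = t u w - t v w := fun u v w => (tl w).map_sub u v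
  have j := hj x' y' z'
  have e : b x' (b y' z') = - b y' (b z' x') - b z' (b x' y') := by
    rw [← sub_eq_zero]; rw [← j]; abel
  simp only [ba, bs, ta, ts, la, ls, h1, h2, e]
  rw [hs (t x y') z', hs (t y z') x', hs (t z x') y']
  abel

/-- the double bracket on `A × A` of a regular BiHom-post-Lie
algebra is a BiHom-Lie bracket. -/
theorem double_bracket_biHomLie {K A : Type*} [Field K] [CharZero K]
    [AddCommGroup A] [Module K A] (b t : A → A → A) (α β α' β' : A → A)
    (h : IsBiHomPostLie K b t α β)
    (hαα' : ∀ x, α (α' x) = x) (hα'α : ∀ x, α' (α x) = x)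
    (hββ' : ∀ x, β (β' x) = x) (hβ'β : ∀ x, β' (β x) = x) :
    IsBiHomLie K
      (fun p q : A × A =>
        (t p.1 q.1 - t (α' (β q.1)) (α (β' p.1)) + b p.1 q.1,
         t p.1 q.2 - t (α' (β q.1)) (α (β' p.2)) + b p.2 q.2))
      (fun p => (α p.1, α p.2)) (fun p => (β p.1, β p.2)) := by
  obtain ⟨⟨⟨bl, br⟩, αl, βl, hc, hαb, hβb, hs, hj⟩, ⟨tl, tr⟩, hαt, hβt, h1, h2⟩ := h
  have c1 : ∀ x, α' (β x) = β (α' x) := fun x => by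
    rw [← hα'α (β (α' x)), hc, hαα']
  have c2 : ∀ x, β' (α x) = α (β' x) := fun x => by
    rw [← hβ'β (α (β' x)), ← hc, hββ']
  have c3 : ∀ x, β' (α' x) = α' (β' x) := fun x => by
    rw [← hα'α (β' (α' x)), ← c2, hαα']
  have α'l : IsLinearMap K α' := ⟨fun x y => by
      rw [← hα'α (α' x + α' y), αl.map_add, hαα', hαα'], fun c x => by
      rw [← hα'α (c • α' x), αl.map_smul, hαα']⟩
  have β'l : IsLinearMap K β' := ⟨fun x y => by
      rw [← hβ'β (β' x + β' y), βl.map_add, hββ', hββ'], fun c x => by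
      rw [← hβ'β (c • β' x), βl.map_smul, hββ']⟩
  obtain ⟨b0, hb0⟩ : ∃ b0 : A → A → A, ∀ x y, b0 x y = b (α' x) (β' y) := ⟨_, fun _ _ => rfl⟩
  obtain ⟨t0, ht0⟩ : ∃ t0 : A → A → A, ∀ x y, t0 x y = t (α' x) (β' y) := ⟨_, fun _ _ => rfl⟩
  have hb : ∀ x y, b x y = b0 (α x) (β y) := fun x y => by rw [hb0, hα'α, hβ'β]
  have ht : ∀ x y, t x y = t0 (α x) (β y) := fun x y => by rw [ht0, hα'α, hβ'β]
  have αb0 : ∀ x y, α (b0 x y) = b0 (α x) (α y) := fun x y => by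
    rw [hb0, hb0, hαb, hαα', hα'α, c2]
  have βb0 : ∀ x y, β (b0 x y) = b0 (β x) (β y) := fun x y => by
    rw [hb0, hb0, hβb, hββ', hβ'β, c1]
  have αt0 : ∀ x y, α (t0 x y) = t0 (α x) (α y) := fun x y => by
    rw [ht0, ht0, hαt, hαα', hα'α, c2]
  have βt0 : ∀ x y, β (t0 x y) = t0 (β x) (β y) := fun x y => by
    rw [ht0, ht0, hβt, hββ', hβ'β, c1]
  have b0l : IsBilin K b0 := by
    constructor <;> intro w <;> constructor <;> intros <;>
      simp only [hb0, α'l.map_add, α'l.map_smul, β'l.map_add, β'l.map_smul,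
        (bl _).map_add, (bl _).map_smul, (br _).map_add, (br _).map_smul]
  have t0l : IsBilin K t0 := by
    constructor <;> intro w <;> constructor <;> intros <;>
      simp only [ht0, α'l.map_add, α'l.map_smul, β'l.map_add, β'l.map_smul,
        (tl _).map_add, (tl _).map_smul, (tr _).map_add, (tr _).map_smul]
  have s0 : ∀ x y, b0 x y = - b0 y x := fun x y => by
    have := hs (α' (β' x)) (α' (β' y))
    simpa only [hb, hc, hαα', hββ', c1] using this
  have hP : IsPostLie K b0 t0 := by
    refine ⟨⟨b0l, s0, fun x y z => ?_⟩, t0l, fun x y z => ?_, fun x y z => ?_⟩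
    · have := hj (α' (β' (β' x))) (α' (β' (β' y))) (α' (β' (β' z)))
      simpa only [hb, hc, hαα', hββ', c1, βb0] using this
    · have := h1 (α' (α' (β' x))) (α' (β' y)) (β' (β' z))
      simpa only [hb, ht, hc, hαα', hββ', c1, αb0, βb0, αt0, βt0] using this
    · have := h2 (α' (α' (β' x))) (α' (α' (β' y))) (β' (β' z))
      simpa only [hb, ht, hc, hαα', hββ', c1, αb0, βb0, αt0, βt0] using this
  have αs := αl.map_sub
  have βs := βl.map_sub
  have e : (fun p q : A × A =>
        (t p.1 q.1 - t (α' (β q.1)) (α (β' p.1)) + b p.1 q.1,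
         t p.1 q.2 - t (α' (β q.1)) (α (β' p.2)) + b p.2 q.2)) =
      (fun p q : A × A =>
        (t0 (α p.1) (β q.1) - t0 (β q.1) (α p.1) + b0 (α p.1) (β q.1),
         t0 (α p.1) (β q.2) - t0 (β q.1) (α p.2) + b0 (α p.2) (β q.2))) := by
    funext p q
    simp only [hb, ht, hαα', ← hc, hββ']
  rw [e]
  refine ⟨⟨fun q => ⟨fun p p' => ?_, fun c p => ?_⟩, fun q => ⟨fun p p' => ?_, fun c p => ?_⟩⟩,
    ⟨fun p q => ?_, fun c p => ?_⟩, ⟨fun p q => ?_, fun c p => ?_⟩, fun p => ?_,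
    fun p q => ?_, fun p q => ?_, fun p q => ?_, fun p q r => ?_⟩
  iterate 4
    · ext <;> simp only [Prod.fst_add, Prod.snd_add, Prod.smul_fst, Prod.smul_snd,
        αl.map_add, βl.map_add, αl.map_smul, βl.map_smul,
        (b0l.1 _).map_add, (b0l.2 _).map_add, (b0l.1 _).map_smul, (b0l.2 _).map_smul,
        (t0l.1 _).map_add, (t0l.2 _).map_add, (t0l.1 _).map_smul, (t0l.2 _).map_smul,
        smul_add, smul_sub] <;> abel
  · ext <;> simp only [Prod.fst_add, Prod.snd_add, αl.map_add]
  · ext <;> simp only [Prod.smul_fst, Prod.smul_snd, αl.map_smul]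
  · ext <;> simp only [Prod.fst_add, Prod.snd_add, βl.map_add]
  · ext <;> simp only [Prod.smul_fst, Prod.smul_snd, βl.map_smul]
  · ext <;> simp only [hc]
  · ext <;> simp only [αl.map_add, αs, αt0, αb0, hc]
  · ext <;> simp only [βl.map_add, βs, βt0, βb0, hc]
  · ext
    · simp only [hc, Prod.fst_neg]
      rw [s0 (β (α p.1))]; abel
    · simp only [hc, Prod.snd_neg]
      rw [s0 (β (α p.2))]; abel
  · have J := double_jacobi b0 t0 hP (β (β (α p.1))) (β (β (α q.1))) (β (β (α r.1)))
    ext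
    · have := J (β (β (α p.1))) (β (β (α q.1))) (β (β (α r.1)))
      simpa only [hc, βl.map_add, βs, βt0, βb0, Prod.fst_add, Prod.fst_zero] using this
    · have := J (β (β (α p.2))) (β (β (α q.2))) (β (β (α r.2)))
      simpa only [hc, βl.map_add, βs, βt0, βb0, Prod.snd_add, Prod.snd_zero] using this
end

section
/- Let (A,·,α,β) be a regular BiHom-LR algebra over a field K of characteristic zero. Define x ▷ y = −x·y and [x,y] = x·y − α⁻¹β(y)·αβ⁻¹(x) for all x,y ∈ A. Then (A,[·,·],▷,α,β) is a BiHom-post-Lie algebra. -/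
/-- `(A, m, α, β)` is a BiHom-LR algebra. -/
def IsBiHomLR {K A : Type*} [Field K] [AddCommGroup A] [Module K A]
    (m : A → A → A) (α β : A → A) : Prop :=
  IsBilin K m ∧ IsLinearMap K α ∧ IsLinearMap K β ∧
    (∀ x, α (β x) = β (α x)) ∧
    (∀ x y, α (m x y) = m (α x) (α y)) ∧
    (∀ x y, β (m x y) = m (β x) (β y)) ∧
    (∀ x y z, m (m x y) (α z) = m (m x z) (α y)) ∧
    (∀ x y z, m (β x) (m y z) = m (β y) (m x z))

/-- a regular BiHom-LR algebra gives a BiHom-post-Lie algebra. -/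
theorem biHomPostLie_of_biHomLR {K A : Type*} [Field K] [CharZero K]
    [AddCommGroup A] [Module K A] (m : A → A → A) (α β α' β' : A → A)
    (h : IsBiHomLR (K := K) m α β)
    (hαα' : ∀ x, α (α' x) = x) (hα'α : ∀ x, α' (α x) = x)
    (hββ' : ∀ x, β (β' x) = x) (hβ'β : ∀ x, β' (β x) = x) :
    IsBiHomPostLie K (fun x y => m x y - m (α' (β y)) (α (β' x)))
      (fun x y => - m x y) α β := by
  obtain ⟨⟨hl, hr⟩, ha, hb, hab, hma, hmb, hR, hL⟩ := h
  have hab' : ∀ x, α' (β x) = β (α' x) := fun x => by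
    rw [← hα'α (β (α' x)), hab, hαα']
  have hba' : ∀ x, β' (α x) = α (β' x) := fun x => by
    rw [← hβ'β (α (β' x)), ← hab, hββ']
  obtain ⟨p, hp⟩ : ∃ p : A → A → A, ∀ x y, p x y = m (α' x) (β' y) := ⟨_, fun _ _ => rfl⟩
  have hm : ∀ x y, m x y = p (α x) (β y) := fun x y => by rw [hp, hα'α, hβ'β]
  have hpa : ∀ x y, α (p x y) = p (α x) (α y) := fun x y => by
    rw [hp, hp, hma, hαα', hα'α, hba']
  have hpb : ∀ x y, β (p x y) = p (β x) (β y) := fun x y => by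
    rw [hp, hp, hmb, hββ', hβ'β, hab']
  have sur : ∀ x, ∃ y, x = α (α (β (β y))) := fun x =>
    ⟨β' (β' (α' (α' x))), by simp only [hββ', hαα']⟩
  have hbr : ∀ x y, m x y - m (α' (β y)) (α (β' x)) = p (α x) (β y) - p (β y) (α x) := by
    intro x y
    rw [hm, hm, hαα', ← hab, hββ']
  have pR : ∀ x y z, p (p x y) z = p (p x z) y := by
    intro x y z
    obtain ⟨x, rfl⟩ := sur x
    obtain ⟨y, rfl⟩ := sur y
    obtain ⟨z, rfl⟩ := sur z
    have := hR (β (β x)) (α (β y)) (α (β z))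
    simp only [hm, hpa, hpb, hab] at this ⊢
    exact this
  have pL : ∀ x y z, p x (p y z) = p y (p x z) := by
    intro x y z
    obtain ⟨x, rfl⟩ := sur x
    obtain ⟨y, rfl⟩ := sur y
    obtain ⟨z, rfl⟩ := sur z
    have := hL (α (β x)) (α (β y)) (α (α z))
    simp only [hm, hpa, hpb, hab] at this ⊢
    exact this
  have pal : ∀ x y z, p (x + y) z = p x z + p y z := fun x y z => by
    have := (hl (β' z)).map_add (α' x) (α' y)
    have e : α' (x + y) = α' x + α' y := by
      rw [← hα'α (α' x + α' y), ha.map_add, hαα', hαα']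
    simpa only [hp, e] using this
  have par : ∀ x y z, p z (x + y) = p z x + p z y := fun x y z => by
    have := (hr (α' z)).map_add (β' x) (β' y)
    have e : β' (x + y) = β' x + β' y := by
      rw [← hβ'β (β' x + β' y), hb.map_add, hββ', hββ']
    simpa only [hp, e] using this
  have psl : ∀ (c : K) x z, p (c • x) z = c • p x z := fun c x z => by
    have := (hl (β' z)).map_smul c (α' x)
    have e : α' (c • x) = c • α' x := by
      rw [← hα'α (c • α' x), ha.map_smul, hαα']
    simpa only [hp, e] using this
  have psr : ∀ (c : K) x z, p z (c • x) = c • p z x := fun c x z => by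
    have := (hr (α' z)).map_smul c (β' x)
    have e : β' (c • x) = c • β' x := by
      rw [← hβ'β (c • β' x), hb.map_smul, hββ']
    simpa only [hp, e] using this
  have pnl : ∀ x z, p (-x) z = - p x z := fun x z => by
    simpa using psl (-1) x z
  have pnr : ∀ x z, p z (-x) = - p z x := fun x z => by
    simpa using psr (-1) x z
  have pdl : ∀ x y z, p (x - y) z = p x z - p y z := fun x y z => by
    rw [sub_eq_add_neg, pal, pnl, sub_eq_add_neg]
  have pdr : ∀ x y z, p z (x - y) = p z x - p z y := fun x y z => by
    rw [sub_eq_add_neg, par, pnr, sub_eq_add_neg]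
  have jac : ∀ x y z, p x (p y z - p z y) - p (p y z - p z y) x
      + (p y (p z x - p x z) - p (p z x - p x z) y)
      + (p z (p x y - p y x) - p (p x y - p y x) z) = 0 := by
    intro x y z
    simp only [pdl, pdr]
    rw [pL x y z, pL x z y, pL y z x, pR y z x, pR z y x, pR x z y]
    abel
  simp only [hbr]
  simp only [hm]
  refine ⟨⟨⟨fun y => ⟨?_, ?_⟩, fun x => ⟨?_, ?_⟩⟩, ha, hb, hab, ?_, ?_, ?_, ?_⟩,
    ⟨fun y => ⟨?_, ?_⟩, fun x => ⟨?_, ?_⟩⟩, ?_, ?_, ?_, ?_⟩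
  · intro x z
    simp only [ha.map_add, pal, par]; abel
  · intro c x
    simp only [ha.map_smul, psl, psr, smul_sub]
  · intro x z
    simp only [hb.map_add, pal, par]; abel
  · intro c x
    simp only [hb.map_smul, psl, psr, smul_sub]
  · intro x y
    simp only [ha.map_sub, hpa, hab]
  · intro x y
    simp only [hb.map_sub, hpb, hab]
  · intro x y
    simp only [hab]; abel
  · intro x y z
    simp only [hb.map_sub, hpb, hab]
    exact jac _ _ _
  · intro x z
    simp only [ha.map_add, pal]; abel
  · intro c x
    simp only [ha.map_smul, psl, smul_neg]
  · intro x z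
    simp only [hb.map_add, par]; abel
  · intro c x
    simp only [hb.map_smul, psr, smul_neg]
  · intro x y
    simp only [ha.map_neg, hpa, hab]
  · intro x y
    simp only [hb.map_neg, hpb, hab]
  · intro x y z
    simp only [ha.map_neg, hb.map_neg, hb.map_sub, hpa, hpb, hab, pdr, pnl, pnr]
    rw [pR (β (α (α x))) (β (α y)) (β (β z)), pL (β (α (α x))) (β (α y)),
      pL (β (α (α x))) (β (β z))]
    abel
  · intro x y z
    simp only [ha.map_neg, hb.map_neg, ha.map_sub, hpa, hpb, hab, pdl, pnl, pnr]
    rw [pL (β (α (α x))) (β (α (α y)))]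
    abel
end

section
/- Let (A,≺,≻,·,α,β) be a regular BiHom-tri-dendriform algebra over a field K of characteristic zero. Define [x,y] = x·y − α⁻¹β(y)·αβ⁻¹(x) and x ▷ y = x ≻ y − α⁻¹β(y) ≺ αβ⁻¹(x) for all x,y ∈ A. Then (A,[·,·],▷,α,β) is a BiHom-post-Lie algebra. -/
/-- `(A, p, s, m, α, β)` is a BiHom-tri-dendriform algebra, where `p = ≺`,
`s = ≻` and `m = ·`. -/
def IsBiHomTriDendriform {K A : Type*} [Field K] [AddCommGroup A] [Module K A]
    (p s m : A → A → A) (α β : A → A) : Prop :=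
  IsBilin K p ∧ IsBilin K s ∧ IsBilin K m ∧
    IsLinearMap K α ∧ IsLinearMap K β ∧
    (∀ x, α (β x) = β (α x)) ∧
    (∀ x y, α (p x y) = p (α x) (α y)) ∧
    (∀ x y, α (s x y) = s (α x) (α y)) ∧
    (∀ x y, α (m x y) = m (α x) (α y)) ∧
    (∀ x y, β (p x y) = p (β x) (β y)) ∧
    (∀ x y, β (s x y) = s (β x) (β y)) ∧
    (∀ x y, β (m x y) = m (β x) (β y)) ∧
    (∀ x y z, p (p x y) (β z) = p (α x) (p y z + s y z + m y z)) ∧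
    (∀ x y z, p (s x y) (β z) = s (α x) (p y z)) ∧
    (∀ x y z, s (α x) (s y z) = s (p x y + s x y + m x y) (β z)) ∧
    (∀ x y z, m (α x) (s y z) = m (p x y) (β z)) ∧
    (∀ x y z, s (α x) (m y z) = m (s x y) (β z)) ∧
    (∀ x y z, m (α x) (p y z) = p (m x y) (β z)) ∧
    (∀ x y z, m (α x) (m y z) = m (m x y) (β z))

/-- additivity facts from bilinearity -/
theorem IsBilin.facts {K A : Type*} [Field K] [AddCommGroup A] [Module K A]
    {f : A → A → A} (h : IsBilin K f) :
    (∀ x y z, f (x + y) z = f x z + f y z) ∧ (∀ x y z, f x (y + z) = f x y + f x z) ∧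
    (∀ x y z, f (x - y) z = f x z - f y z) ∧ (∀ x y z, f x (y - z) = f x y - f x z) ∧
    (∀ (c : K) x y, f (c • x) y = c • f x y) ∧ (∀ (c : K) x y, f x (c • y) = c • f x y) :=
  ⟨fun x y z => (h.1 z).map_add x y, fun x y z => (h.2 x).map_add y z,
   fun x y z => (h.1 z).map_sub x y, fun x y z => (h.2 x).map_sub y z,
   fun c x y => (h.1 y).map_smul c x, fun c x y => (h.2 x).map_smul c y⟩

/-- the difference of a bilinear map and a flipped bilinear map is bilinear -/
theorem IsBilin.sub_flip {K A : Type*} [Field K] [AddCommGroup A] [Module K A]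
    {f g : A → A → A} (hf : IsBilin K f) (hg : IsBilin K g) :
    IsBilin K (fun x y => f x y - g y x) := by
  obtain ⟨f1, f2, -, -, f5, f6⟩ := hf.facts
  obtain ⟨g1, g2, -, -, g5, g6⟩ := hg.facts
  refine ⟨fun y => ⟨fun a b => ?_, fun c a => ?_⟩, fun y => ⟨fun a b => ?_, fun c a => ?_⟩⟩
  · simp only [f1, g2]; abel
  · simp only [f5, g6, smul_sub]
  · simp only [f2, g1]; abel
  · simp only [f6, g5, smul_sub]

/-- precomposition of a bilinear map with linear maps -/
theorem IsBilin.comp {K A : Type*} [Field K] [AddCommGroup A] [Module K A]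
    {f : A → A → A} (hf : IsBilin K f) {a b : A → A} (ha : IsLinearMap K a)
    (hb : IsLinearMap K b) : IsBilin K (fun x y => f (a x) (b y)) := by
  obtain ⟨f1, f2, -, -, f5, f6⟩ := hf.facts
  refine ⟨fun y => ⟨fun u v => ?_, fun c u => ?_⟩, fun y => ⟨fun u v => ?_, fun c u => ?_⟩⟩
  · simp only [ha.map_add, f1]
  · simp only [ha.map_smul, f5]
  · simp only [hb.map_add, f2]
  · simp only [hb.map_smul, f6]

/-- a two-sided inverse of a linear map is linear -/
theorem isLinearMap_inv {K A : Type*} [Field K] [AddCommGroup A] [Module K A]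
    {a a' : A → A} (ha : IsLinearMap K a) (h1 : ∀ x, a (a' x) = x) (h2 : ∀ x, a' (a x) = x) :
    IsLinearMap K a' := by
  refine ⟨fun x y => ?_, fun c x => ?_⟩
  · rw [← h2 (a' x + a' y), ha.map_add, h1, h1]
  · rw [← h2 (c • a' x), ha.map_smul, h1]

/-- The untwisted statement: a tri-dendriform algebra gives a post-Lie algebra. -/
theorem isPostLie_of_triDendriform {K A : Type*} [Field K] [AddCommGroup A] [Module K A]
    {p s m : A → A → A} (hp : IsBilin K p) (hs : IsBilin K s) (hm : IsBilin K m)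
    (e1 : ∀ x y z, p (p x y) z = p x (p y z + s y z + m y z))
    (e2 : ∀ x y z, p (s x y) z = s x (p y z))
    (e3 : ∀ x y z, s x (s y z) = s (p x y + s x y + m x y) z)
    (e4 : ∀ x y z, m x (s y z) = m (p x y) z)
    (e5 : ∀ x y z, s x (m y z) = m (s x y) z)
    (e6 : ∀ x y z, m x (p y z) = p (m x y) z)
    (e7 : ∀ x y z, m x (m y z) = m (m x y) z) :
    IsPostLie K (fun x y => m x y - m y x) (fun x y => s x y - p y x) := by
  have hb := hm.sub_flip hm
  have ht := hs.sub_flip hp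
  obtain ⟨p1, p2, p3, p4, -, -⟩ := hp.facts
  obtain ⟨s1, s2, s3, s4, -, -⟩ := hs.facts
  obtain ⟨m1, m2, m3, m4, -, -⟩ := hm.facts
  refine ⟨⟨hb, fun x y => ?_, fun x y z => ?_⟩, ht, fun x y z => ?_, fun x y z => ?_⟩
  · exact (neg_sub _ _).symm
  all_goals
    simp only [p1, p2, p3, p4, s1, s2, s3, s4, m1, m2, m3, m4, e1, e2, e3, e4, e5, e6, e7]
    abel

/-- Yau twist of a post-Lie algebra by two commuting endomorphisms. -/
theorem IsPostLie.twist {K A : Type*} [Field K] [AddCommGroup A] [Module K A]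
    {b t : A → A → A} {α β : A → A} (h : IsPostLie K b t)
    (hα : IsLinearMap K α) (hβ : IsLinearMap K β) (hc : ∀ x, α (β x) = β (α x))
    (ab : ∀ x y, α (b x y) = b (α x) (α y)) (bb : ∀ x y, β (b x y) = b (β x) (β y))
    (alt : ∀ x y, α (t x y) = t (α x) (α y)) (bt : ∀ x y, β (t x y) = t (β x) (β y)) :
    IsBiHomPostLie K (fun x y => b (α x) (β y)) (fun x y => t (α x) (β y)) α β := by
  obtain ⟨⟨hb, hsk, hj⟩, ht, h1, h2⟩ := h
  refine ⟨⟨hb.comp hα hβ, hα, hβ, hc, ?_, ?_, ?_, ?_⟩, ht.comp hα hβ, ?_, ?_, ?_, ?_⟩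
  · intro x y; simp only [ab, hc]
  · intro x y; simp only [bb, hc]
  · intro x y; simp only [hc]; exact hsk _ _
  · intro x y z; simp only [bb, hc]; exact hj _ _ _
  · intro x y; simp only [alt, hc]
  · intro x y; simp only [bt, hc]
  · intro x y z; simp only [bb, bt, alt, hc]; exact h1 _ _ _
  · intro x y z; simp only [ab, bt, alt, hc]; exact h2 _ _ _

/-- a regular BiHom-tri-dendriform algebra gives a
BiHom-post-Lie algebra. -/
theorem biHomPostLie_of_biHomTriDendriform {K A : Type*} [Field K] [CharZero K]
    [AddCommGroup A] [Module K A] (p s m : A → A → A) (α β α' β' : A → A)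
    (h : IsBiHomTriDendriform (K := K) p s m α β)
    (hαα' : ∀ x, α (α' x) = x) (hα'α : ∀ x, α' (α x) = x)
    (hββ' : ∀ x, β (β' x) = x) (hβ'β : ∀ x, β' (β x) = x) :
    IsBiHomPostLie K (fun x y => m x y - m (α' (β y)) (α (β' x)))
      (fun x y => s x y - p (α' (β y)) (α (β' x))) α β := by
  obtain ⟨hp, hs, hm, hα, hβ, hc, ap, as, am, bp, bs, bm, e1, e2, e3, e4, e5, e6, e7⟩ := h
  have hα' := isLinearMap_inv hα hαα' hα'α
  have hβ' := isLinearMap_inv hβ hββ' hβ'β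
  have c1 : ∀ x, α (β' x) = β' (α x) := fun x => by
    rw [← hβ'β (α (β' x)), ← hc, hββ']
  have c2 : ∀ x, α' (β x) = β (α' x) := fun x => by
    rw [← hα'α (β (α' x)), hc, hαα']
  have c3 : ∀ x, α' (β' x) = β' (α' x) := fun x => by
    rw [← hα'α (β' (α' x)), c1, hαα']
  have inva : ∀ f : A → A → A, (∀ x y, α (f x y) = f (α x) (α y)) →
      ∀ x y, α' (f x y) = f (α' x) (α' y) := fun f hf x y => by
    rw [← hα'α (f (α' x) (α' y)), hf, hαα', hαα']
  have invb : ∀ f : A → A → A, (∀ x y, β (f x y) = f (β x) (β y)) →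
      ∀ x y, β' (f x y) = f (β' x) (β' y) := fun f hf x y => by
    rw [← hβ'β (f (β' x) (β' y)), hf, hββ', hββ']
  have key : IsPostLie K
      (fun x y => m (α' x) (β' y) - m (α' y) (β' x))
      (fun x y => s (α' x) (β' y) - p (α' y) (β' x)) := by
    refine isPostLie_of_triDendriform (p := fun x y => p (α' x) (β' y))
      (s := fun x y => s (α' x) (β' y)) (m := fun x y => m (α' x) (β' y))
      (hp.comp hα' hβ') (hs.comp hα' hβ') (hm.comp hα' hβ') ?_ ?_ ?_ ?_ ?_ ?_ ?_ <;>
    intro x y z <;>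
    simp only [hα'.map_add, hβ'.map_add, inva p ap, inva s as, inva m am,
      invb p bp, invb s bs, invb m bm, c3]
    · simpa only [hββ', hαα'] using e1 (α' (α' x)) (β' (α' y)) (β' (β' z))
    · simpa only [hββ', hαα'] using e2 (α' (α' x)) (β' (α' y)) (β' (β' z))
    · simpa only [hββ', hαα'] using e3 (α' (α' x)) (β' (α' y)) (β' (β' z))
    · simpa only [hββ', hαα'] using e4 (α' (α' x)) (β' (α' y)) (β' (β' z))
    · simpa only [hββ', hαα'] using e5 (α' (α' x)) (β' (α' y)) (β' (β' z))
    · simpa only [hββ', hαα'] using e6 (α' (α' x)) (β' (α' y)) (β' (β' z))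
    · simpa only [hββ', hαα'] using e7 (α' (α' x)) (β' (α' y)) (β' (β' z))
  have fin := key.twist hα hβ hc
    (fun x y => by simp only [hα.map_sub, am, hαα', hα'α, c1])
    (fun x y => by simp only [hβ.map_sub, bm, hββ', hβ'β, c2])
    (fun x y => by simp only [hα.map_sub, as, ap, hαα', hα'α, c1])
    (fun x y => by simp only [hβ.map_sub, bs, bp, hββ', hβ'β, c2])
  simpa only [hα'α, hβ'β, c1] using fin
end

section
/- Let (A,[·,·],α,β) be a regular BiHom-Lie algebra over a field K of characteristic zero, (V,[·,·]_V,ρ,φ,ψ) a regular A-module K-algebra, and T : V → A an O-operator of weight λ ∈ K associated to (V,[·,·]_V,ρ,φ,ψ). Define {u,v} = λ[u,v]_V and u ▷ v = ρ(T(u))v for u,v ∈ V. Then (V,{·,·},▷,φ,ψ) is a BiHom-post-Lie algebra, and T is a morphism of BiHom-Lie algebras from the sub-adjacent BiHom-Lie algebra of (V,{·,·},▷,φ,ψ) to (A,[·,·],α,β), i.e., T({u,v} + u ▷ v − φ⁻¹ψ(v) ▷ φψ⁻¹(u)) = [T(u),T(v)] for all u,v ∈ V. -/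
/-- an `O`-operator of weight `λ` on a regular `A`-module
`K`-algebra induces a BiHom-post-Lie algebra structure on `V`, and `T` is a
morphism from its sub-adjacent BiHom-Lie algebra to `(A, b, α, β)`. -/
theorem biHomPostLie_of_OOperator {K A V : Type*} [Field K] [CharZero K]
    [AddCommGroup A] [Module K A] [AddCommGroup V] [Module K V]
    (b : A → A → A) (α β α' β' : A → A) (bv : V → V → V) (ρ : A → V → V)
    (φ ψ φ' ψ' : V → V) (T : V → A) (lam : K)
    (hb : IsBiHomLie K b α β)
    (hαα' : ∀ x, α (α' x) = x) (hα'α : ∀ x, α' (α x) = x)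
    (hββ' : ∀ x, β (β' x) = x) (hβ'β : ∀ x, β' (β x) = x)
    (hmod : IsModuleKAlgebra K b α β bv ρ φ ψ)
    (hφφ' : ∀ v, φ (φ' v) = v) (hφ'φ : ∀ v, φ' (φ v) = v)
    (hψψ' : ∀ v, ψ (ψ' v) = v) (hψ'ψ : ∀ v, ψ' (ψ v) = v)
    (hT : IsLinearMap K T)
    (hTφ : ∀ v, T (φ v) = α (T v)) (hTψ : ∀ v, T (ψ v) = β (T v))
    (hO : ∀ u v, b (T u) (T v) =
      T (ρ (T u) v - ρ (T (φ' (ψ v))) (φ (ψ' u)) + lam • bv u v)) :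
    IsBiHomPostLie K (fun u v => lam • bv u v) (fun u v => ρ (T u) v) φ ψ ∧
      (∀ u v,
        T (lam • bv u v + ρ (T u) v - ρ (T (φ' (ψ v))) (φ (ψ' u))) =
          b (T u) (T v)) := by
  obtain ⟨⟨⟨hl, hr⟩, fφ, fψ, hc, h1, h2, h3, h4⟩, ⟨-, -, -, r1, r2, r3, r4, r5⟩, hd⟩ := hmod
  refine ⟨⟨⟨⟨?_, ?_⟩, fφ, fψ, hc, ?_, ?_, ?_, ?_⟩, ⟨?_, ?_⟩, ?_, ?_, ?_, ?_⟩, ?_⟩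
  · intro y
    exact ⟨fun u v => by simp only [(hl y).map_add, smul_add],
      fun c u => by simp only [(hl y).map_smul, smul_comm c lam]⟩
  · intro y
    exact ⟨fun u v => by simp only [(hr y).map_add, smul_add],
      fun c u => by simp only [(hr y).map_smul, smul_comm c lam]⟩
  · intro x y
    simp only [fφ.map_smul, h1]
  · intro x y
    simp only [fψ.map_smul, h2]
  · intro x y
    simp only [h3 x y, smul_neg]
  · intro x y z
    simp only [(hr _).map_smul, ← smul_add, h4, smul_zero]
  · intro y
    exact ⟨fun u v => by simp only [hT.map_add, (r2 y).map_add],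
      fun c u => by simp only [hT.map_smul, (r2 y).map_smul]⟩
  · intro x
    exact r1 (T x)
  · intro x y
    simp only [hTφ, r3]
  · intro x y
    simp only [hTψ, r4]
  · intro x y z
    simp only [hTφ, hTψ, (r1 _).map_smul, (hl _).map_smul, (hr _).map_smul, hd, smul_add]
  · intro x y z
    have e := hO (ψ x) (φ y)
    rw [hψ'ψ, ← hc, hφ'φ, hT.map_add, hT.map_sub] at e
    have e2 := r5 (T x) (T (φ y)) z
    rw [← hTψ x, e, (r2 _).map_add, (r2 _).map_sub] at e2
    have hab : α (β (T y)) = β (α (T y)) := hb.2.2.2.1 _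
    simp only [hTφ, hTψ, hab] at e2 ⊢
    rw [← sub_eq_zero] at e2 ⊢
    rw [← e2]
    abel
  · intro u v
    rw [hO]
    congr 1
    abel
end

section
/- Let (A,[·,·],α,β) be a regular BiHom-Lie algebra over a field K of characteristic zero. Then there exists a compatible BiHom-post-Lie algebra structure on A (i.e., a bilinear bracket [·,·]' and bilinear operation ▷ such that (A,[·,·]',▷,α,β) is a BiHom-post-Lie algebra whose sub-adjacent BiHom-Lie bracket x ▷ y − α⁻¹β(y) ▷ αβ⁻¹(x) + [x,y]' equals [x,y]) if and only if there exists some λ ∈ K, a regular A-module K-algebra (V,[·,·]_V,ρ,φ,ψ), and an invertible O-operator T : V → A of weight λ associated to it. -/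
/-- The data of a regular `A`-module `K`-algebra together with an invertible
`O`-operator `T : V → A` of weight `lam` on it. -/
structure InvertibleOOperatorData (K : Type u) [Field K] {A : Type v}
    [AddCommGroup A] [Module K A] (b : A → A → A) (α β : A → A) (lam : K) :
    Type (max (v + 1) u) where
  V : Type v
  [instAddCommGroup : AddCommGroup V]
  [instModule : Module K V]
  bv : V → V → V
  ρ : A → V → V
  φ : V → V
  ψ : V → V
  φ' : V → V
  ψ' : V → V
  T : V → A
  hmod : IsModuleKAlgebra K b α β bv ρ φ ψ
  hφφ' : ∀ v, φ (φ' v) = v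
  hφ'φ : ∀ v, φ' (φ v) = v
  hψψ' : ∀ v, ψ (ψ' v) = v
  hψ'ψ : ∀ v, ψ' (ψ v) = v
  hT : IsLinearMap K T
  hTbij : Function.Bijective T
  hTφ : ∀ v, T (φ v) = α (T v)
  hTψ : ∀ v, T (ψ v) = β (T v)
  hO : ∀ u v, b (T u) (T v) =
    T (ρ (T u) v - ρ (T (φ' (ψ v))) (φ (ψ' u)) + lam • bv u v)

/-- a regular BiHom-Lie algebra admits a compatible
BiHom-post-Lie structure iff it admits an invertible `O`-operator of some
weight `λ` on some regular `A`-module `K`-algebra. -/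
theorem compatible_biHomPostLie_iff_invertible_OOperator {K : Type u}
    {A : Type v} [Field K] [CharZero K] [AddCommGroup A] [Module K A]
    (b : A → A → A) (α β α' β' : A → A)
    (hb : IsBiHomLie K b α β)
    (hαα' : ∀ x, α (α' x) = x) (hα'α : ∀ x, α' (α x) = x)
    (hββ' : ∀ x, β (β' x) = x) (hβ'β : ∀ x, β' (β x) = x) :
    (∃ b' t' : A → A → A, IsBiHomPostLie K b' t' α β ∧
        ∀ x y, t' x y - t' (α' (β y)) (α (β' x)) + b' x y = b x y) ↔
      ∃ lam : K, Nonempty (InvertibleOOperatorData K b α β lam) := by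
  constructor
  · rintro ⟨b', t, ⟨hb', ht, htα, htβ, hder, hpl⟩, hc⟩
    obtain ⟨hbb, hα, hβ, hαβ, hbα, hbβ, hskew, hjac⟩ := hb
    refine ⟨1, ⟨{ V := A, bv := b', ρ := t, φ := α, ψ := β, φ' := α', ψ' := β', T := id
                  hmod := ⟨hb', ⟨hα, hβ, hαβ, ht.2, ht.1, fun x v => (htα x v).symm,
                    fun x v => (htβ x v).symm, ?_⟩, hder⟩
                  hφφ' := hαα', hφ'φ := hα'α, hψψ' := hββ', hψ'ψ := hβ'β
                  hT := ⟨fun _ _ => rfl, fun _ _ => rfl⟩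
                  hTbij := Function.bijective_id
                  hTφ := fun _ => rfl
                  hTψ := fun _ => rfl
                  hO := ?_ }⟩⟩
    · intro x y v
      obtain ⟨y, rfl⟩ : ∃ z, α z = y := ⟨α' y, hαα' y⟩
      have h1 := hc (β x) (α y)
      rw [hβ'β, ← hαβ y, hα'α] at h1
      rw [← h1, (ht.1 _).map_add, (ht.1 _).map_sub, hpl, ← hαβ y]
      abel
    · intro u v
      simp only [id, one_smul]
      exact (hc u v).symm
  · rintro ⟨lam, ⟨⟨V, bv, ρ, φ, ψ, φ', ψ', T, hmod, hφφ', hφ'φ, hψψ', hψ'ψ, hT, hTbij,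
      hTφ, hTψ, hO⟩⟩⟩
    obtain ⟨⟨hbv, hφ, hψ, hφψ, hvφ, hvψ, hvs, hvj⟩, ⟨-, -, -, hρ2, hρ1, hρφ, hρψ, hρb⟩, hder⟩ :=
      hmod
    obtain ⟨hbb, hα, hβ, hαβ, hbα, hbβ, hskew, hjac⟩ := hb
    obtain ⟨S, hST, hTS⟩ := Function.bijective_iff_has_inverse.mp hTbij
    replace hST : ∀ v, S (T v) = v := hST
    replace hTS : ∀ x, T (S x) = x := hTS
    have hSa : ∀ x y, S (x + y) = S x + S y := fun x y => by
      apply hTbij.1; rw [hT.map_add, hTS, hTS, hTS]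
    have hSs : ∀ (c : K) x, S (c • x) = c • S x := fun c x => by
      apply hTbij.1; rw [hT.map_smul, hTS, hTS]
    have hSα : ∀ x, S (α x) = φ (S x) := fun x => by
      apply hTbij.1; rw [hTφ, hTS, hTS]
    have hSβ : ∀ x, S (β x) = ψ (S x) := fun x => by
      apply hTbij.1; rw [hTψ, hTS, hTS]
    have hSα' : ∀ x, S (α' x) = φ' (S x) := fun x => by
      rw [← hφ'φ (S (α' x)), ← hSα, hαα']
    have hSβ' : ∀ x, S (β' x) = ψ' (S x) := fun x => by
      rw [← hψ'ψ (S (β' x)), ← hSβ, hββ']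
    have b1a : ∀ x y z, bv (x + y) z = bv x z + bv y z := fun x y z => (hbv.1 z).map_add x y
    have b1s : ∀ (c : K) x z, bv (c • x) z = c • bv x z := fun c x z => (hbv.1 z).map_smul c x
    have b2a : ∀ x y z, bv z (x + y) = bv z x + bv z y := fun x y z => (hbv.2 z).map_add x y
    have b2s : ∀ (c : K) x z, bv z (c • x) = c • bv z x := fun c x z => (hbv.2 z).map_smul c x
    refine ⟨fun x y => lam • T (bv (S x) (S y)), fun x y => T (ρ x (S y)),
      ⟨⟨⟨?_, ?_⟩, hα, hβ, hαβ, ?_, ?_, ?_, ?_⟩, ⟨?_, ?_⟩, ?_, ?_, ?_, ?_⟩, ?_⟩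
    · refine fun y => ⟨fun x z => ?_, fun c x => ?_⟩
      · simp only [hSa, b1a, hT.map_add, smul_add]
      · simp only [hSs, b1s, hT.map_smul, smul_comm lam c]
    · refine fun y => ⟨fun x z => ?_, fun c x => ?_⟩
      · simp only [hSa, b2a, hT.map_add, smul_add]
      · simp only [hSs, b2s, hT.map_smul, smul_comm lam c]
    · intro x y
      simp only [hα.map_smul, ← hTφ, hvφ, hSα]
    · intro x y
      simp only [hβ.map_smul, ← hTψ, hvψ, hSβ]
    · intro x y
      simp only [hSα, hSβ]
      rw [hvs, hT.map_neg, smul_neg]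
    · intro x y z
      simp only [hSα, hSβ, hSs, hST, b2s, hT.map_smul]
      rw [← smul_add, ← smul_add, ← smul_add, ← smul_add, ← hT.map_add, ← hT.map_add, hvj,
        hT.map_zero, smul_zero, smul_zero]
    · refine fun y => ⟨fun x z => ?_, fun c x => ?_⟩
      · simp only [(hρ1 _).map_add, hT.map_add]
      · simp only [(hρ1 _).map_smul, hT.map_smul]
    · refine fun y => ⟨fun x z => ?_, fun c x => ?_⟩
      · simp only [hSa, (hρ2 _).map_add, hT.map_add]
      · simp only [hSs, (hρ2 _).map_smul, hT.map_smul]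
    · intro x y
      simp only [← hTφ, ← hρφ, hSα]
    · intro x y
      simp only [← hTψ, ← hρψ, hSβ]
    · intro x y z
      simp only [hSs, hST, hSβ, (hρ2 _).map_smul, hT.map_smul, hder, hT.map_add, smul_add]
    · intro x y z
      have h1 := hO (S (β x)) (S (α y))
      simp only [hTS, hT.map_add, hT.map_sub, hT.map_smul] at h1
      rw [← hSβ', ← hSα, hβ'β, hSα y, ← hφψ, hφ'φ, hTψ, hTS] at h1
      have h2 : lam • T (bv (S (β x)) (S (α y))) =
          b (β x) (α y) - T (ρ (β x) (S (α y))) + T (ρ (β y) (S (α x))) := by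
        rw [h1, hSα y]; abel
      simp only [h2, hST]
      rw [hSβ z, (hρ1 _).map_add, (hρ1 _).map_sub, hρb, hT.map_add, hT.map_sub, hT.map_sub,
        ← hαβ y]
      abel
    · intro x y
      have h1 := hO (S x) (S y)
      simp only [hTS, hT.map_add, hT.map_sub, hT.map_smul] at h1
      rw [h1, ← hSβ y, ← hSα', hTS, ← hSβ', ← hSα]
end

section
/- Let (A,[·,·],α,β) be a regular BiHom-Lie algebra over a field K of characteristic zero and let R : A → A be a Rota-Baxter operator of weight λ ∈ K. Then (A,{·,·},▷,α,β) is a BiHom-post-Lie algebra, where {x,y} = λ[x,y] and x ▷ y = [R(x),y] for all x,y ∈ A. -/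
/-- a Rota-Baxter operator of weight `λ` on a regular
BiHom-Lie algebra gives a BiHom-post-Lie algebra structure. -/
theorem biHomPostLie_of_rotaBaxter {K A : Type*} [Field K] [CharZero K]
    [AddCommGroup A] [Module K A] (b : A → A → A) (α β : A → A) (R : A → A)
    (lam : K)
    (hb : IsBiHomLie K b α β)
    (hαbij : Function.Bijective α) (hβbij : Function.Bijective β)
    (hR : IsLinearMap K R)
    (hRα : ∀ x, R (α x) = α (R x)) (hRβ : ∀ x, R (β x) = β (R x))
    (hRB : ∀ x y, b (R x) (R y) = R (b (R x) y + b x (R y) + lam • b x y)) :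
    IsBiHomPostLie K (fun x y => lam • b x y) (fun x y => b (R x) y) α β := by
  obtain ⟨⟨hl, hr⟩, hα, hβ, hc, hαb, hβb, hsk, hj⟩ := hb
  have addl : ∀ x y z, b (x + y) z = b x z + b y z := fun x y z => (hl z).map_add x y
  have addr : ∀ x y z, b x (y + z) = b x y + b x z := fun x y z => (hr x).map_add y z
  have sl : ∀ (c : K) x z, b (c • x) z = c • b x z := fun c x z => (hl z).map_smul c x
  have sr : ∀ (c : K) x z, b x (c • z) = c • b x z := fun c x z => (hr x).map_smul c z
  have negl : ∀ x z, b (-x) z = - b x z := fun x z => (hl z).map_neg x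
  have negr : ∀ x z, b x (-z) = - b x z := fun x z => (hr x).map_neg z
  have J : ∀ x y z, b (α (β x)) (b y z) = b (b (β x) y) (β z) + b (β y) (b (α x) z) := by
    intro x y z
    obtain ⟨x, rfl⟩ := hβbij.2 x
    obtain ⟨y, rfl⟩ := hβbij.2 y
    obtain ⟨z, rfl⟩ := hαbij.2 z
    have h := hj (α x) y z
    have h1 : b (β z) (α (α x)) = - b (β (α x)) (α z) := hsk _ _
    have h2 : b (β (β z)) (b (β (α x)) (α y)) = - b (b (β (β x)) (β y)) (β (α z)) := by
      rw [← hc x, ← hαb, hsk, hβb, hc z]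
    rw [h1, h2, negr] at h
    simp only [hc]
    rw [← sub_eq_zero, ← h]
    abel
  refine ⟨⟨⟨?_, ?_⟩, hα, hβ, hc, ?_, ?_, ?_, ?_⟩, ⟨?_, ?_⟩, ?_, ?_, ?_, ?_⟩
  · intro y
    exact ⟨fun u v => by simp only [addl, smul_add], fun c u => by
      simp only [sl]; exact smul_comm _ _ _⟩
  · intro y
    exact ⟨fun u v => by simp only [addr, smul_add], fun c u => by
      simp only [sr]; exact smul_comm _ _ _⟩
  · intro x y
    simp only [hα.map_smul, hαb]
  · intro x y
    simp only [hβ.map_smul, hβb]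
  · intro x y
    show lam • b (β x) (α y) = - (lam • b (β y) (α x))
    rw [hsk, smul_neg]
  · intro x y z
    simp only [sr]
    rw [← smul_add, ← smul_add, ← smul_add, ← smul_add, hj, smul_zero, smul_zero]
  · intro y
    exact ⟨fun u v => by simp only [hR.map_add, addl], fun c u => by
      simp only [hR.map_smul, sl]⟩
  · intro x
    exact hr (R x)
  · intro x y
    simp only [hαb, hRα]
  · intro x y
    simp only [hβb, hRβ]
  · intro x y z
    simp only [hRα, hRβ, sr]
    rw [J, smul_add]
  · intro x y z
    have h1 : b (R (b (R (β y)) (α x))) (β z) = - b (R (b (β x) (R (α y)))) (β z) := by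
      rw [hRβ, hsk, hRα, hR.map_neg, negl]
    have h2 := congrArg (fun w => b w (β z)) (hRB (β x) (α y))
    simp only [hR.map_add, addl] at h2
    have h3 := J (R x) (α (R y)) z
    rw [← hc (R y)] at h3
    show b (R (lam • b (β x) (α y))) (β z) =
      (b (R (α (β x))) (b (R (α y)) z) - b (R (b (R (β x)) (α y))) (β z)) -
      (b (R (α (β y))) (b (R (α x)) z) - b (R (b (R (β y)) (α x))) (β z))
    rw [h1]
    rw [show R (α (β x)) = α (β (R x)) by rw [hRα, hRβ],
      show R (α (β y)) = α (β (R y)) by rw [hRα, hRβ], hRα x]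
    rw [← hRα y, ← hRβ x, h2] at h3
    rw [← hRβ x, h3]
    abel
end
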